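/- Let Γ ⊂ ℂ be a quasismooth Jordan curve, n ∈ ℕ, ζ ∈ Γ, and let c₃, c₄ > 0. Suppose q : Γ → ℂ is a Borel function satisfying (a) 1/c₃ ≤ |q(z)| ≤ c₃ whenever z ∈ Γ with |ζ − z| ≤ ρ_{1/n}(z), and (b) |q(z)| ≤ c₄ (ρ_{1/n}(ζ)/|ζ − z|)² whenever z ∈ Γ with |ζ − z| > ρ_{1/n}(z). Then for every r ≥ 1 there is a constant c₇ > 0 depending only on Γ, r, c₃, c₄ such that ρ_{1/n}(ζ)/c₇ ≤ ∫_Γ |q(z)|^r |dz| ≤ c₇ ρ_{1/n}(ζ). -/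

import Mathlib

open MeasureTheory Metric Set Filter Bornology Complex
open scoped ENNReal NNReal Topology

noncomputable section

/-- `Γ` is a Jordan curve: the image of an injective continuous map of the unit circle. -/
def IsJordanCurve (Γ : Set ℂ) : Prop :=
  ∃ γ : ℂ → ℂ, ContinuousOn γ (Metric.sphere (0:ℂ) 1) ∧
    Set.InjOn γ (Metric.sphere (0:ℂ) 1) ∧ Γ = γ '' (Metric.sphere (0:ℂ) 1)

/-- A (closed) subarc of `Γ`: a closed connected subset. -/
def IsSubarc (Γ J : Set ℂ) : Prop :=
  J ⊆ Γ ∧ IsClosed J ∧ IsPreconnected J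

/-- `|Γ(z₁,z₂)|`: the length (1-dimensional Hausdorff measure) of the shorter subarc of `Γ`
joining `z₁` and `z₂`, described as the infimum of lengths of closed connected subsets of `Γ`
containing both points. -/
def shorterArcLength (Γ : Set ℂ) (z₁ z₂ : ℂ) : ℝ≥0∞ :=
  ⨅ (J : Set ℂ) (_ : IsSubarc Γ J ∧ z₁ ∈ J ∧ z₂ ∈ J), μH[1] J

/-- `J` is (a realization of) the shorter arc `Γ(z₁,z₂)` of `Γ` between `z₁` and `z₂`. -/
def IsShorterArc (Γ : Set ℂ) (z₁ z₂ : ℂ) (J : Set ℂ) : Prop :=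
  IsSubarc Γ J ∧ z₁ ∈ J ∧ z₂ ∈ J ∧ μH[1] J = shorterArcLength Γ z₁ z₂

/-- `Γ` is quasismooth (in the sense of Lavrentiev) with constant `Λ ≥ 1`:
`|Γ(z₁,z₂)| ≤ Λ |z₁ - z₂|`. -/
def IsQuasismooth (Γ : Set ℂ) (Λ : ℝ) : Prop :=
  1 ≤ Λ ∧ ∀ z₁ ∈ Γ, ∀ z₂ ∈ Γ,
    shorterArcLength Γ z₁ z₂ ≤ ENNReal.ofReal (Λ * dist z₁ z₂)

/-- The union of the unbounded connected components of `Γᶜ`; for a Jordan curve `Γ` this is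
the (unique) unbounded component `Ω` of the complement of `Γ`. -/
def unboundedComponent (Γ : Set ℂ) : Set ℂ :=
  {z | z ∉ Γ ∧ ¬ Bornology.IsBounded (connectedComponentIn Γᶜ z)}

/-- `d(A,B) := inf {|z-ζ| : z ∈ A, ζ ∈ B}`. -/
def setDist (A B : Set ℂ) : ℝ := sInf (Set.image2 dist A B)

/-- The exterior `𝔻*` of the closed unit disk (finite part). -/
def extDisk : Set ℂ := {w : ℂ | 1 < ‖w‖}

/-- `Φ` is the conformal (holomorphic bijective) map of `Ω` onto `𝔻* = {|w| > 1}` normalized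
by `Φ(∞) = ∞` and `Φ'(∞) := lim_{z→∞} Φ(z)/z > 0`. -/
def IsExtConformal (Ω : Set ℂ) (Φ : ℂ → ℂ) : Prop :=
  DifferentiableOn ℂ Φ Ω ∧ Set.BijOn Φ Ω extDisk ∧
    ∃ c : ℝ, 0 < c ∧
      Filter.Tendsto (fun z => Φ z / z) (Bornology.cobounded ℂ) (nhds (c : ℂ))

/-- `Φ` additionally extends to a homeomorphism of `closure Ω` onto `{|w| ≥ 1}`. -/
def IsExtConformalClosure (Ω : Set ℂ) (Φ : ℂ → ℂ) : Prop :=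
  IsExtConformal Ω Φ ∧ ContinuousOn Φ (closure Ω) ∧
    Set.BijOn Φ (closure Ω) {w : ℂ | 1 ≤ ‖w‖}

/-- The level curve `Γ_δ := {ζ ∈ Ω : |Φ(ζ)| = 1 + δ}`. -/
def levelCurve (Ω : Set ℂ) (Φ : ℂ → ℂ) (δ : ℝ) : Set ℂ :=
  {ζ ∈ Ω | ‖Φ ζ‖ = 1 + δ}

/-- `ρ_δ(z) := d({z}, Γ_δ)`. -/
def rho (Ω : Set ℂ) (Φ : ℂ → ℂ) (δ : ℝ) (z : ℂ) : ℝ :=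
  Metric.infDist z (levelCurve Ω Φ δ)

/-- `ν ∈ A∞(Γ)` with constant `lam ≥ 1`: `ν(J) ≤ lam · ν(S)` for every subarc `J ⊂ Γ` and
every Borel set `S ⊂ J` with `|J| ≤ 2|S|`. -/
def IsAInftyMeasure (Γ : Set ℂ) (ν : MeasureTheory.Measure ℂ) (lam : ℝ) : Prop :=
  1 ≤ lam ∧ ∀ J S : Set ℂ, IsSubarc Γ J → S ⊆ J → MeasurableSet S →
    μH[1] J ≤ 2 * μH[1] S → ν J ≤ ENNReal.ofReal lam * ν S

/-- `g` has a continuous logarithm on `K`. -/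
def HasLogOn (K : Set ℂ) (g : ℂ → ℂ) : Prop :=
  ∃ l : ℂ → ℂ, ContinuousOn l K ∧ ∀ x ∈ K, exp (l x) = g x

namespace HasLogOn

variable {K : Set ℂ} {f g : ℂ → ℂ}

theorem congr (h : HasLogOn K g) (hfg : ∀ x ∈ K, g x = f x) : HasLogOn K f := by
  obtain ⟨l, hl, he⟩ := h
  exact ⟨l, hl, fun x hx => (he x hx).trans (hfg x hx)⟩

theorem mul (hf : HasLogOn K f) (hg : HasLogOn K g) : HasLogOn K (fun x => f x * g x) := by
  obtain ⟨l, hl, he⟩ := hf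
  obtain ⟨m, hm, hem⟩ := hg
  exact ⟨fun x => l x + m x, hl.add hm, fun x hx => by rw [exp_add, he x hx, hem x hx]⟩

theorem inv (hf : HasLogOn K f) : HasLogOn K (fun x => (f x)⁻¹) := by
  obtain ⟨l, hl, he⟩ := hf
  exact ⟨fun x => -l x, hl.neg, fun x hx => by rw [exp_neg, he x hx]⟩

theorem of_slitPlane (hg : ContinuousOn g K) (h : ∀ x ∈ K, g x ∈ slitPlane) : HasLogOn K g :=
  ⟨fun x => log (g x), hg.clog h, fun x hx => exp_log (slitPlane_ne_zero (h x hx))⟩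

end HasLogOn

theorem mem_slitPlane_of_norm_sub_one_lt {z : ℂ} (h : ‖z - 1‖ < 1) : z ∈ slitPlane := by
  left
  have := (abs_re_le_norm (z - 1)).trans_lt h
  rw [sub_re, one_re, abs_lt] at this
  linarith

/-- A continuous function on a preconnected set all of whose values are logarithms of `1` is
constant. -/
theorem IsPreconnected.eq_of_exp_eq_one {X : Type*} [TopologicalSpace X] {S : Set X}
    (hS : IsPreconnected S) {D : X → ℂ} (hD : ContinuousOn D S) (h1 : ∀ x ∈ S, exp (D x) = 1)
    {x y : X} (hx : x ∈ S) (hy : y ∈ S) : D x = D y := by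
  refine hS.induction₂ (fun x y => D x = D y) (fun x hx => ?_) (fun _ _ _ _ _ _ h h' => h.trans h')
    (fun _ _ _ _ h => h.symm) hx hy
  have := (hD x hx).eventually (ball_mem_nhds (D x) (show (0:ℝ) < 1 by norm_num))
  filter_upwards [this, self_mem_nhdsWithin] with y hy hyS
  have h2 : exp (D y) = exp (D x) := (h1 y hyS).trans (h1 x hx).symm
  obtain ⟨n, hn⟩ := exp_eq_exp_iff_exists_int.1 h2
  have h3 : ‖(n : ℂ) * (2 * Real.pi * I)‖ < 1 := by
    have : D y - D x = n * (2 * Real.pi * I) := by rw [hn]; ring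
    rw [← this, ← dist_eq_norm]; exact hy
  have h4 : n = 0 := by
    by_contra h0
    have h5 : (1:ℝ) ≤ |(n:ℝ)| := by exact_mod_cast Int.one_le_abs h0
    simp only [norm_mul, Complex.norm_intCast, norm_ofNat, norm_real, norm_I, mul_one,
      Real.norm_eq_abs, abs_of_pos Real.pi_pos] at h3
    nlinarith [Real.pi_gt_three]
  simpa [h4] using hn.symm

theorem exists_continuous_log {X : Type*} [TopologicalSpace X] [LocallyPathConnectedSpace X]
    [SimplyConnectedSpace X] {g : X → ℂ} (hg : Continuous g) (h0 : ∀ x, g x ≠ 0) :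
    ∃ l : X → ℂ, Continuous l ∧ ∀ x, exp (l x) = g x := by
  have hx : Nonempty X := PathConnectedSpace.nonempty
  obtain ⟨x₀⟩ := hx
  obtain ⟨F, ⟨-, hF⟩, -⟩ := isCoveringMapOn_exp.existsUnique_continuousMap_lifts
    ⟨g, hg⟩ (a₀ := x₀) (exp_log (h0 x₀)) (fun x => h0 x)
  exact ⟨F, F.continuous, fun x => congrFun hF x⟩

/-- A nowhere vanishing continuous function on the plane cannot agree with `x - a` near
infinity. -/
theorem not_nonvanishing_extension {h : ℂ → ℂ} (hc : Continuous h) (h0 : ∀ x, h x ≠ 0) {a : ℂ}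
    {R : ℝ} (hR : ∀ x, R ≤ ‖x‖ → h x = x - a) : False := by
  obtain ⟨l, hl, he⟩ := exists_continuous_log hc h0
  set ρ : ℝ := |R| + ‖a‖ + 1 with hρ
  have hρ0 : 0 < ρ := by positivity
  let c : ℝ → ℂ := fun θ => a + ρ * exp (θ * I)
  have hcR : ∀ θ, R ≤ ‖c θ‖ := fun θ => by
    have h1 : ‖(ρ : ℂ) * exp (θ * I)‖ = ρ := by
      rw [norm_mul, norm_exp_ofReal_mul_I, norm_real, Real.norm_eq_abs, abs_of_pos hρ0, mul_one]
    have h2 : ‖(ρ : ℂ) * exp (θ * I)‖ ≤ ‖c θ‖ + ‖a‖ := by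
      have : (ρ : ℂ) * exp (θ * I) = c θ - a := by simp [c]
      rw [this]; exact norm_sub_le _ _
    have := le_abs_self R
    linarith
  have hcc : Continuous c := by fun_prop
  let D : ℝ → ℂ := fun θ => l (c θ) - (θ * I + log ρ)
  have hD : Continuous D := by fun_prop
  have hD1 : ∀ θ, exp (D θ) = 1 := fun θ => by
    have hρ' : (ρ : ℂ) ≠ 0 := by exact_mod_cast hρ0.ne'
    have : c θ - a = ρ * exp (θ * I) := by simp [c]
    rw [exp_sub, he, hR _ (hcR θ), exp_add, exp_log hρ', this]
    field_simp [exp_ne_zero]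
  have h2 : D 0 = D (2 * Real.pi) :=
    isPreconnected_univ.eq_of_exp_eq_one hD.continuousOn (fun x _ => hD1 x) (mem_univ _)
      (mem_univ _)
  have h3 : c 0 = c (2 * Real.pi) := by simp [c, exp_two_pi_mul_I]
  simp [D, h3] at h2

theorem isPreconnected_norm_gt {R : ℝ} (hR : 0 < R) : IsPreconnected {z : ℂ | R < ‖z‖} := by
  have : {z : ℂ | R < ‖z‖} = exp '' {z | Real.log R < z.re} := by
    ext z
    constructor
    · intro hz
      have hz0 : 0 < ‖z‖ := hR.trans hz
      refine ⟨log z, ?_, exp_log (norm_pos_iff.1 hz0)⟩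
      simpa [log_re] using Real.log_lt_log hR hz
    · rintro ⟨w, hw, rfl⟩
      simpa [norm_exp] using (Real.log_lt_iff_lt_exp hR).1 hw
  rw [this]
  exact ((convex_halfSpace_re_gt _).isPreconnected).image _ continuous_exp.continuousOn

theorem hasLogOn_of_preconnected {K S : Set ℂ} (hK : IsClosed K) (hS : IsPreconnected S)
    (hSK : S ⊆ Kᶜ) {a b : ℂ} (ha : a ∈ S) (hb : b ∈ S) :
    HasLogOn K (fun x => (x - a) / (x - b)) := by
  have hne : ∀ x ∈ K, ∀ y ∈ S, x - y ≠ 0 := fun x hx y hy h =>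
    hSK hy (by rwa [← sub_eq_zero.1 h])
  refine hS.induction₂ (fun a b => HasLogOn K (fun x => (x - a) / (x - b))) (fun a ha => ?_)
    (fun a b c ha hb hc h1 h2 => ?_) (fun a b ha hb h => ?_) ha hb
  · obtain ⟨ε, hε, hball⟩ := Metric.isOpen_iff.1 hK.isOpen_compl a (hSK ha)
    filter_upwards [self_mem_nhdsWithin, mem_nhdsWithin_of_mem_nhds (ball_mem_nhds a hε)]
      with b hb hab
    have : HasLogOn K (fun x => (x - b) / (x - a)) := by
      refine HasLogOn.of_slitPlane ?_ fun x hx => mem_slitPlane_of_norm_sub_one_lt ?_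
      · exact ContinuousOn.div (by fun_prop) (by fun_prop) fun x hx => hne x hx a ha
      · have hxa := hne x hx a ha
        have h1 : (x - b) / (x - a) - 1 = (a - b) / (x - a) := by field_simp; ring
        rw [h1, norm_div, div_lt_one (norm_pos_iff.2 hxa), ← dist_eq_norm, ← dist_eq_norm]
        have h2 : ε ≤ dist x a := by
          by_contra! h
          exact hball h hx
        rw [dist_comm]
        exact (mem_ball.1 hab).trans_le h2
    exact this.inv.congr fun x _ => inv_div _ _
  · refine (h1.mul h2).congr fun x hx => ?_
    have := hne x hx b hb
    have := hne x hx c hc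
    field_simp
  · exact h.inv.congr fun x _ => inv_div _ _

theorem not_bounded_component {K U : Set ℂ} (hK : IsCompact K) {a b : ℂ}
    (hb : b ∉ K) (hUb : IsBounded U) (haU : a ∈ U) (hbU : b ∉ U)
    (hfr : frontier U ⊆ K) (hlog : HasLogOn K (fun x => (x - a) / (x - b))) : False := by
  obtain ⟨l, hl, he⟩ := hlog
  obtain ⟨l', hl'⟩ := ContinuousMap.exists_restrict_eq hK.isClosed
    (⟨K.domRestrict l, continuousOn_iff_continuous_domRestrict.1 hl⟩ : C(K, ℂ))
  have hl'' : ∀ x ∈ K, l' x = l x := fun x hx => by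
    simpa using DFunLike.congr_fun hl' ⟨x, hx⟩
  classical
  let h : ℂ → ℂ := U.piecewise (fun x => exp (l' x) * (x - b)) (fun x => x - a)
  have hcl : closure U ⊆ U ∪ K := by
    rw [closure_eq_self_union_frontier]
    exact union_subset_union_right _ hfr
  have hbcl : b ∉ closure U := fun h => (hcl h).elim hbU hb
  have hc : Continuous h := by
    refine continuous_piecewise (fun x hx => ?_) (by fun_prop) (by fun_prop)
    have hxK := hfr hx
    have hxb : x - b ≠ 0 := sub_ne_zero.2 fun e => hb (e ▸ hxK)
    rw [hl'' x hxK, he x hxK]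
    field_simp
  have h0 : ∀ x, h x ≠ 0 := fun x => by
    by_cases hx : x ∈ U
    · simp only [h, piecewise_eq_of_mem _ _ _ hx]
      exact mul_ne_zero (exp_ne_zero _) (sub_ne_zero.2 fun e => hbU (e ▸ hx))
    · simp only [h, piecewise_eq_of_notMem _ _ _ hx]
      exact sub_ne_zero.2 fun e => hx (e ▸ haU)
  obtain ⟨R, hR⟩ := hUb.exists_norm_le
  refine not_nonvanishing_extension hc h0 (a := a) (R := R + 1) fun x hx => ?_
  have : x ∉ U := fun hxU => by have := hR x hxU; linarith
  simp only [h, piecewise_eq_of_notMem _ _ _ this]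

theorem frontier_connectedComponentIn_subset {K : Set ℂ} (hK : IsClosed K) (a : ℂ) :
    frontier (connectedComponentIn Kᶜ a) ⊆ K := by
  intro x hx
  by_contra hxK
  have ho : IsOpen (connectedComponentIn Kᶜ a) := hK.isOpen_compl.connectedComponentIn
  have hx' : IsOpen (connectedComponentIn Kᶜ x) := hK.isOpen_compl.connectedComponentIn
  rw [ho.frontier_eq] at hx
  obtain ⟨y, hy1, hy2⟩ := mem_closure_iff.1 hx.1 _ hx' (mem_connectedComponentIn hxK)
  have h1 := connectedComponentIn_eq hy1
  have h2 := connectedComponentIn_eq hy2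
  exact hx.2 (by rw [h2, ← h1]; exact mem_connectedComponentIn hxK)

theorem connectedComponentIn_compl_eq_of_not_isBounded {K : Set ℂ} (hK : IsBounded K) {a b : ℂ}
    (ha : ¬ IsBounded (connectedComponentIn Kᶜ a)) (hb : ¬ IsBounded (connectedComponentIn Kᶜ b)) :
    connectedComponentIn Kᶜ a = connectedComponentIn Kᶜ b := by
  obtain ⟨R, hR0, hR⟩ := hK.exists_pos_norm_le
  have hfar : ∀ a, ¬ IsBounded (connectedComponentIn Kᶜ a) →
      ∃ x ∈ connectedComponentIn Kᶜ a, R < ‖x‖ := fun a ha => by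
    by_contra! h
    exact ha (isBounded_iff_forall_norm_le.2 ⟨R, h⟩)
  obtain ⟨x, hx, hxR⟩ := hfar a ha
  obtain ⟨y, hy, hyR⟩ := hfar b hb
  rw [connectedComponentIn_eq hx, connectedComponentIn_eq hy]
  have hsub : {z : ℂ | R < ‖z‖} ⊆ Kᶜ := fun z hz hzK => (hR z hzK).not_gt hz
  exact connectedComponentIn_eq
    ((isPreconnected_norm_gt hR0).subset_connectedComponentIn hxR hsub hyR)

/-- If `(x - a) / (x - b)` has a continuous logarithm on the compact set `K`, then `K` does not
separate `a` from `b`. -/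
theorem mem_connectedComponentIn_of_hasLogOn {K : Set ℂ} (hK : IsCompact K) {a b : ℂ}
    (ha : a ∉ K) (hb : b ∉ K) (hlog : HasLogOn K (fun x => (x - a) / (x - b))) :
    b ∈ connectedComponentIn Kᶜ a := by
  by_contra hab
  have hba : a ∉ connectedComponentIn Kᶜ b := fun h =>
    hab (by rw [← connectedComponentIn_eq h]; exact mem_connectedComponentIn hb)
  have hfr := frontier_connectedComponentIn_subset hK.isClosed
  by_cases h1 : IsBounded (connectedComponentIn Kᶜ a)
  · exact not_bounded_component hK hb h1
      (mem_connectedComponentIn ha) hab (hfr a) hlog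
  by_cases h2 : IsBounded (connectedComponentIn Kᶜ b)
  · exact not_bounded_component hK ha h2
      (mem_connectedComponentIn hb) hba (hfr b) (hlog.inv.congr fun x _ => inv_div _ _)
  · exact hab (by
      rw [connectedComponentIn_compl_eq_of_not_isBounded hK.isBounded h1 h2]
      exact mem_connectedComponentIn hb)

/-- Gluing of logarithms: if `g` has logarithms on two closed sets and any two points of their
intersection lie in a common preconnected subset of both (possibly after enlarging one domain), the
logarithms can be chosen to match. -/
theorem HasLogOn.union {K L M : Set ℂ} {g : ℂ → ℂ} (hK : IsClosed K) (hL : IsClosed L)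
    (hLM : L ⊆ M) (hgK : HasLogOn K g) (hgM : HasLogOn M g)
    (hJ : ∀ x ∈ K ∩ L, ∀ y ∈ K ∩ L, ∃ J ⊆ K ∩ M, IsPreconnected J ∧ x ∈ J ∧ y ∈ J) :
    HasLogOn (K ∪ L) g := by
  obtain ⟨l, hl, he⟩ := hgK
  obtain ⟨m, hm, hem⟩ := hgM
  have hexp : ∀ x ∈ K ∩ M, exp (m x - l x) = 1 := fun x hx => by
    rw [exp_sub, he x hx.1, hem x hx.2, div_self]
    rw [← he x hx.1]; exact exp_ne_zero _
  obtain ⟨c, hc, key⟩ : ∃ c : ℂ, exp c = 1 ∧ ∀ x ∈ K ∩ L, m x - l x = c := by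
    rcases (K ∩ L).eq_empty_or_nonempty with h0 | ⟨x₀, hx₀⟩
    · exact ⟨0, exp_zero, fun x hx => absurd hx (by simp [h0])⟩
    · refine ⟨m x₀ - l x₀, hexp x₀ ⟨hx₀.1, hLM hx₀.2⟩, fun x hx => ?_⟩
      obtain ⟨J, hJs, hJc, h1, h2⟩ := hJ x hx x₀ hx₀
      exact hJc.eq_of_exp_eq_one (D := fun x => m x - l x)
        ((hm.mono fun y hy => (hJs hy).2).sub (hl.mono fun y hy => (hJs hy).1))
        (fun y hy => hexp y (hJs hy)) h1 h2
  classical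
  refine ⟨K.piecewise l (fun x => m x - c), ?_, ?_⟩
  · refine ContinuousOn.union_of_isClosed ?_ ?_ hK hL
    · exact hl.congr fun x hx => piecewise_eq_of_mem _ _ _ hx
    · have hmc : ContinuousOn (fun x => m x - c) L := (hm.mono hLM).sub continuousOn_const
      refine hmc.congr fun x hx => ?_
      by_cases hxK : x ∈ K
      · rw [piecewise_eq_of_mem _ _ _ hxK, ← key x ⟨hxK, hx⟩]
        exact (sub_sub_cancel _ _).symm
      · rw [piecewise_eq_of_notMem _ _ _ hxK]
  · rintro x hx
    by_cases hxK : x ∈ K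
    · rw [piecewise_eq_of_mem _ _ _ hxK, he x hxK]
    · rw [piecewise_eq_of_notMem _ _ _ hxK, exp_sub, hem x (hLM (hx.resolve_left hxK)), hc,
        div_one]

/-- An injectively parametrized arc does not separate the plane; more generally `x - a` has a
logarithm on it. -/
theorem hasLogOn_arc {γ : ℝ → ℂ} {s t : ℝ} (hst : s ≤ t) (hγ : ContinuousOn γ (Icc s t))
    (hinj : InjOn γ (Icc s t)) {g : ℂ → ℂ} (hg : ContinuousOn g (γ '' Icc s t))
    (h0 : ∀ x ∈ γ '' Icc s t, g x ≠ 0) : HasLogOn (γ '' Icc s t) g := by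
  let e : Icc s t → ℂ := fun u => γ u
  have hec : Continuous e := continuousOn_iff_continuous_domRestrict.1 hγ
  have hei : Function.Injective e := fun u v h => Subtype.ext (hinj u.2 v.2 h)
  have hemb : Topology.IsClosedEmbedding e := hec.isClosedEmbedding hei
  have hgc : Continuous fun u : ℝ => g (e (projIcc s t hst u)) := by
    refine hg.comp_continuous (by fun_prop) fun u => ?_
    exact mem_image_of_mem _ (Subtype.coe_prop _)
  obtain ⟨l, hl, he⟩ := exists_continuous_log hgc
    (fun u => h0 _ (mem_image_of_mem _ (Subtype.coe_prop _)))
  refine ⟨fun x => l (Function.invFunOn γ (Icc s t) x), ?_, ?_⟩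
  · have hr : range e = γ '' Icc s t := by
      change range (γ ∘ Subtype.val) = _
      rw [range_comp, Subtype.range_coe]
    rw [continuousOn_iff_continuous_domRestrict]
    let E : Icc s t ≃ₜ γ '' Icc s t := hemb.toIsEmbedding.toHomeomorph.trans (Homeomorph.setCongr hr)
    rw [← E.comp_continuous_iff']
    have : (domRestrict (γ '' Icc s t) fun x => l (Function.invFunOn γ (Icc s t) x)) ∘ E
        = fun u : Icc s t => l u := by
      ext u
      change l (Function.invFunOn γ (Icc s t) (γ u)) = l u
      rw [hinj.leftInvOn_invFunOn u.2]
    rw [this]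
    fun_prop
  · rintro _ ⟨u, hu, rfl⟩
    simp only [hinj.leftInvOn_invFunOn hu, he]
    rw [projIcc_of_mem hst hu]

/-! ### Length and connectedness -/

theorem IsPreconnected.ofReal_le_hausdorffMeasure {J : Set ℂ} (hJ : IsPreconnected J) {x y : ℂ}
    (hx : x ∈ J) (hy : y ∈ J) {r : ℝ} (hr : r ≤ dist y x) :
    ENNReal.ofReal r ≤ μH[1] (J ∩ closedBall x r) := by
  have hlip : LipschitzOnWith 1 (fun z => dist z x) (J ∩ closedBall x r) :=
    (LipschitzWith.dist_left x).lipschitzOnWith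
  have h1 := hlip.hausdorffMeasure_image_le zero_le_one
  rw [ENNReal.coe_one, ENNReal.one_rpow, one_mul, hausdorffMeasure_real] at h1
  refine le_trans ?_ h1
  have h2 : Icc 0 r ⊆ (fun z => dist z x) '' (J ∩ closedBall x r) := fun t ht => by
    have h3 : Icc (dist x x) (dist y x) ⊆ (fun z => dist z x) '' J :=
      hJ.intermediate_value hx hy (f := fun z => dist z x) (by fun_prop)
    obtain ⟨z, hz, rfl⟩ := h3 ⟨by simpa using ht.1, ht.2.trans hr⟩
    exact ⟨z, ⟨hz, ht.2⟩, rfl⟩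
  calc ENNReal.ofReal r = volume (Icc 0 r) := by simp
    _ ≤ _ := measure_mono h2

theorem IsPreconnected.ofReal_dist_le_hausdorffMeasure {J : Set ℂ} (hJ : IsPreconnected J)
    {x y : ℂ} (hx : x ∈ J) (hy : y ∈ J) : ENNReal.ofReal (dist y x) ≤ μH[1] J :=
  (hJ.ofReal_le_hausdorffMeasure hx hy le_rfl).trans (measure_mono inter_subset_left)

theorem IsQuasismooth.exists_subarc {Γ : Set ℂ} {Λ : ℝ} (h : IsQuasismooth Γ Λ) {x y : ℂ}
    (hx : x ∈ Γ) (hy : y ∈ Γ) :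
    ∃ J ⊆ Γ, IsPreconnected J ∧ x ∈ J ∧ y ∈ J ∧
      μH[1] J ≤ ENNReal.ofReal ((Λ + 1) * dist y x) := by
  rcases eq_or_ne x y with rfl | hxy
  · refine ⟨{x}, by simpa using hx, isPreconnected_singleton, rfl, rfl, ?_⟩
    have := Measure.nullSingletonClass_hausdorff ℂ one_pos
    rw [measure_singleton]; exact zero_le
  have h1 := h.2 x hx y hy
  have h2 : shorterArcLength Γ x y < ENNReal.ofReal ((Λ + 1) * dist y x) := by
    refine h1.trans_lt ?_
    have hd := dist_pos.2 hxy
    have := h.1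
    rw [dist_comm y, ENNReal.ofReal_lt_ofReal_iff (by positivity)]
    nlinarith
  simp only [shorterArcLength, iInf_lt_iff] at h2
  obtain ⟨J, ⟨⟨hJ, -, hc⟩, hxJ, hyJ⟩, hlt⟩ := h2
  exact ⟨J, hJ, hc, hxJ, hyJ, hlt.le⟩

theorem IsQuasismooth.exists_subarc_subset_closedBall {Γ : Set ℂ} {Λ : ℝ} (h : IsQuasismooth Γ Λ)
    {x y : ℂ} (hx : x ∈ Γ) (hy : y ∈ Γ) :
    ∃ J ⊆ Γ, IsPreconnected J ∧ x ∈ J ∧ y ∈ J ∧ J ⊆ closedBall x ((Λ + 1) * dist y x) := by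
  obtain ⟨J, hJ, hc, hxJ, hyJ, hm⟩ := h.exists_subarc hx hy
  refine ⟨J, hJ, hc, hxJ, hyJ, fun z hz => ?_⟩
  have h1 := (hc.ofReal_dist_le_hausdorffMeasure hxJ hz).trans hm
  have := h.1
  exact (ENNReal.ofReal_le_ofReal_iff (by positivity)).1 h1

/-! ### Periodic parametrization of a Jordan curve -/

/-- A `2π`-periodic continuous parametrization of `Γ`, injective on half-open periods. -/
structure IsJordanParam (Γ : Set ℂ) (γ : ℝ → ℂ) : Prop where
  continuous : Continuous γ
  periodic : Function.Periodic γ (2 * Real.pi)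
  injOn : ∀ s, InjOn γ (Ico s (s + 2 * Real.pi))
  range_eq : range γ = Γ

theorem IsJordanCurve.exists_param {Γ : Set ℂ} (h : IsJordanCurve Γ) :
    ∃ γ, IsJordanParam Γ γ := by
  obtain ⟨g, hc, hi, rfl⟩ := h
  have hs : ∀ t : ℝ, exp (t * I) ∈ sphere (0:ℂ) 1 := fun t => by simp [norm_exp_ofReal_mul_I]
  refine ⟨fun t => g (exp (t * I)), hc.comp_continuous (by fun_prop) hs, fun t => ?_,
    fun s x hx y hy hxy => ?_, ?_⟩
  · congr 1
    rw [exp_eq_exp_iff_exists_int]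
    exact ⟨1, by push_cast; ring⟩
  · obtain ⟨n, hn⟩ := exp_eq_exp_iff_exists_int.1 (hi (hs x) (hs y) hxy)
    have h1 : x = y + n * (2 * Real.pi) := by
      have : ((x:ℂ)) = ((y + n * (2 * Real.pi) : ℝ) : ℂ) := by
        push_cast
        apply mul_right_cancel₀ I_ne_zero
        rw [hn]; ring
      exact_mod_cast this
    have hp := Real.pi_pos
    have h2 : n = 0 := by
      have h3 : (n:ℝ) < 1 := by
        by_contra! h
        nlinarith [hx.2, hy.1]
      have h4 : (-1:ℝ) < n := by
        by_contra! h
        nlinarith [hx.1, hy.2]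
      have h3' : n < 1 := by exact_mod_cast h3
      have h4' : -1 < n := by exact_mod_cast h4
      omega
    simpa [h2] using h1
  · ext z
    constructor
    · rintro ⟨t, rfl⟩
      exact mem_image_of_mem _ (hs t)
    · rintro ⟨w, hw, rfl⟩
      refine ⟨arg w, ?_⟩
      have : exp (arg w * I) = w := by
        have := norm_mul_exp_arg_mul_I w
        rwa [mem_sphere_zero_iff_norm.1 hw, ofReal_one, one_mul] at this
      simp [this]

namespace IsJordanParam

variable {Γ : Set ℂ} {γ : ℝ → ℂ}

theorem mem (h : IsJordanParam Γ γ) (t : ℝ) : γ t ∈ Γ := h.range_eq ▸ mem_range_self t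

theorem exists_eq (h : IsJordanParam Γ γ) (s : ℝ) {z : ℂ} (hz : z ∈ Γ) :
    ∃ t ∈ Ico s (s + 2 * Real.pi), γ t = z := by
  rw [← h.range_eq] at hz
  obtain ⟨t, rfl⟩ := hz
  obtain ⟨y, hy, he⟩ := h.periodic.exists_mem_Ico (by positivity) t s
  exact ⟨y, hy, he.symm⟩

theorem isCompact (h : IsJordanParam Γ γ) : IsCompact Γ := by
  have : Γ = γ '' Icc 0 (0 + 2 * Real.pi) := by
    ext z
    constructor
    · intro hz
      obtain ⟨t, ht, rfl⟩ := h.exists_eq 0 hz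
      exact ⟨t, Ico_subset_Icc_self ht, rfl⟩
    · rintro ⟨t, -, rfl⟩
      exact h.mem t
  rw [this]
  exact isCompact_Icc.image h.continuous

theorem isPreconnected (h : IsJordanParam Γ γ) : IsPreconnected Γ :=
  h.range_eq ▸ isPreconnected_range h.continuous

theorem injOn_Icc (h : IsJordanParam Γ γ) {s t : ℝ} (hst : t < s + 2 * Real.pi) :
    InjOn γ (Icc s t) :=
  (h.injOn s).mono (Icc_subset_Ico_right hst)

/-- A preconnected subset of `Γ` meeting both arcs determined by two points contains one of these
points. -/
theorem endpoint_mem (h : IsJordanParam Γ γ) {s t : ℝ} (hst : s ≤ t)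
    (hts : t < s + 2 * Real.pi) {J : Set ℂ} (hJ : IsPreconnected J) (hJΓ : J ⊆ Γ)
    (h1 : (J ∩ γ '' Icc s t).Nonempty) (h2 : (J ∩ γ '' Icc t (s + 2 * Real.pi)).Nonempty) :
    γ s ∈ J ∨ γ t ∈ J := by
  have hcl : ∀ a b, IsClosed (γ '' Icc a b) := fun a b =>
    (isCompact_Icc.image h.continuous).isClosed
  have hcov : J ⊆ γ '' Icc s t ∪ γ '' Icc t (s + 2 * Real.pi) := fun z hz => by
    obtain ⟨u, hu, rfl⟩ := h.exists_eq s (hJΓ hz)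
    rcases le_total u t with hle | hle
    · exact Or.inl ⟨u, ⟨hu.1, hle⟩, rfl⟩
    · exact Or.inr ⟨u, ⟨hle, hu.2.le⟩, rfl⟩
  obtain ⟨z, hz, ⟨u, hu, hu'⟩, v, hv, hv'⟩ := isPreconnected_closed_iff.1 hJ _ _
    (hcl s t) (hcl t (s + 2 * Real.pi)) hcov h1 h2
  rcases hv.2.eq_or_lt with he | hlt
  · left
    rw [he, h.periodic] at hv'
    rwa [hv']
  · right
    have : u = v := h.injOn s ⟨hu.1, hu.2.trans_lt hts⟩ ⟨hst.trans hv.1, hlt⟩ (hu'.trans hv'.symm)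
    have : u = t := le_antisymm hu.2 (this ▸ hv.1)
    rwa [← this, hu']

end IsJordanParam

theorem measure_image_Icc_le_of_forall {γ : ℝ → ℂ} (s b : ℝ) (c : ℝ≥0∞) :
    μH[1] (γ '' {t | t ∈ Icc s b ∧ μH[1] (γ '' Icc s t) ≤ c}) ≤ c := by
  set P : Set ℝ := {t | t ∈ Icc s b ∧ μH[1] (γ '' Icc s t) ≤ c} with hP
  rcases P.eq_empty_or_nonempty with h0 | hne
  · simp [h0]
  have hbdd : BddAbove P := ⟨b, fun t ht => ht.1.2⟩
  obtain ⟨u, hmono, hlim, hu⟩ := exists_seq_tendsto_sSup hne hbdd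
  have hsub : γ '' P ⊆ (⋃ n, γ '' Icc s (u n)) ∪ {γ (sSup P)} := by
    rintro _ ⟨t, ht, rfl⟩
    rcases (le_csSup hbdd ht).eq_or_lt with he | hlt
    · right; rw [he]; rfl
    · left
      obtain ⟨n, hn⟩ := (hlim.eventually (lt_mem_nhds hlt)).exists
      exact mem_iUnion.2 ⟨n, t, ⟨ht.1.1, hn.le⟩, rfl⟩
  have := Measure.nullSingletonClass_hausdorff ℂ one_pos
  refine (measure_mono hsub).trans ((measure_union_le _ _).trans ?_)
  rw [measure_singleton, add_zero, Monotone.measure_iUnion]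
  · exact iSup_le fun n => (hu n).2
  · exact fun m n hmn => image_mono (Icc_subset_Icc_right (hmono hmn))

theorem IsJordanParam.image_subset_of_preconnected {Γ : Set ℂ} {γ : ℝ → ℂ} (h : IsJordanParam Γ γ)
    {s t : ℝ} {J : Set ℂ} (hJ : IsPreconnected J)
    (hJΓ : J ⊆ Γ) (h1 : γ s ∈ J) (h2 : γ t ∈ J) :
    γ '' Icc s t ⊆ J ∨ γ '' Icc t (s + 2 * Real.pi) ⊆ J := by
  by_contra! hcon
  obtain ⟨⟨_, ⟨v, hv, rfl⟩, hvJ⟩, ⟨_, ⟨w, hw, rfl⟩, hwJ⟩⟩ :=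
    And.intro (not_subset.1 hcon.1) (not_subset.1 hcon.2)
  have hsv : s < v := hv.1.lt_of_ne fun e => hvJ (e ▸ h1)
  have hws : w < s + 2 * Real.pi := hw.2.lt_of_ne fun e => hwJ (by rwa [e, h.periodic])
  rcases h.endpoint_mem (s := v) (t := w) (hv.2.trans hw.1) (by linarith) hJ hJΓ
    ⟨_, h2, t, ⟨hv.2, hw.1⟩, rfl⟩
    ⟨_, h1, s + 2 * Real.pi, ⟨hws.le, by linarith⟩, h.periodic s⟩ with h' | h'
  · exact hvJ h'
  · exact hwJ h'

theorem IsQuasismooth.hausdorffMeasure_inter_closedBall_le {Γ : Set ℂ} {Λ : ℝ}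
    (hΓ : IsJordanCurve Γ) (h : IsQuasismooth Γ Λ) {ζ : ℂ} (hζ : ζ ∈ Γ) (R : ℝ) :
    μH[1] (Γ ∩ closedBall ζ R) ≤ 2 * ENNReal.ofReal ((Λ + 1) * R) := by
  obtain ⟨γ, hγ⟩ := hΓ.exists_param
  obtain ⟨s, -, rfl⟩ := hγ.exists_eq 0 hζ
  set c := ENNReal.ofReal ((Λ + 1) * R)
  have hL := h.1
  have hsub : Γ ∩ closedBall (γ s) R ⊆
      γ '' {t | t ∈ Icc s (s + 2 * Real.pi) ∧ μH[1] (γ '' Icc s t) ≤ c} ∪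
      (fun t => γ (-t)) '' {t | t ∈ Icc (-(s + 2 * Real.pi)) (-s) ∧
        μH[1] ((fun t => γ (-t)) '' Icc (-(s + 2 * Real.pi)) t) ≤ c} := by
    rintro z ⟨hz, hzR⟩
    obtain ⟨t, ht, rfl⟩ := hγ.exists_eq s hz
    obtain ⟨J, hJ, hJc, h1, h2, hm⟩ := h.exists_subarc (hγ.mem s) (hγ.mem t)
    have hm' : μH[1] J ≤ c := hm.trans (ENNReal.ofReal_le_ofReal
      (mul_le_mul_of_nonneg_left hzR (by linarith)))
    rcases hγ.image_subset_of_preconnected hJc hJ h1 h2 with h' | h'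
    · exact Or.inl ⟨t, ⟨Ico_subset_Icc_self ht, (measure_mono h').trans hm'⟩, rfl⟩
    · refine Or.inr ⟨-t, ⟨⟨by linarith [ht.2], by linarith [ht.1]⟩, (measure_mono ?_).trans hm'⟩,
        by simp⟩
      rintro _ ⟨v, hv, rfl⟩
      exact h' ⟨-v, ⟨by linarith [hv.2], by linarith [hv.1]⟩, rfl⟩
  refine (measure_mono hsub).trans ((measure_union_le _ _).trans ?_)
  rw [two_mul c]
  exact add_le_add (measure_image_Icc_le_of_forall _ _ _) (measure_image_Icc_le_of_forall _ _ _)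

/-! ### The unbounded component -/

theorem isPreconnected_compl_closedBall (p : ℂ) {R : ℝ} (hR : 0 < R) :
    IsPreconnected (closedBall p R)ᶜ := by
  have : (closedBall p R)ᶜ = (fun z => z + p) '' {z : ℂ | R < ‖z‖} := by
    ext z
    simp only [mem_compl_iff, mem_closedBall, not_le, dist_eq_norm]
    constructor
    · exact fun h => ⟨z - p, h, by simp⟩
    · rintro ⟨w, hw, rfl⟩
      simpa using hw
  rw [this]
  exact (isPreconnected_norm_gt hR).image _ (by fun_prop)

section UnboundedComponent

variable {Γ : Set ℂ}

theorem unboundedComponent_eq (hΓ : IsBounded Γ) {a : ℂ} (ha : a ∈ unboundedComponent Γ) :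
    unboundedComponent Γ = connectedComponentIn Γᶜ a := by
  ext b
  constructor
  · intro hb
    rw [connectedComponentIn_compl_eq_of_not_isBounded hΓ ha.2 hb.2]
    exact mem_connectedComponentIn hb.1
  · intro hb
    refine ⟨connectedComponentIn_subset _ _ hb, ?_⟩
    rw [← connectedComponentIn_eq hb]
    exact ha.2

theorem isPreconnected_unboundedComponent (hΓ : IsBounded Γ) :
    IsPreconnected (unboundedComponent Γ) := by
  rcases (unboundedComponent Γ).eq_empty_or_nonempty with h | ⟨a, ha⟩
  · rw [h]; exact isPreconnected_empty
  · rw [unboundedComponent_eq hΓ ha]; exact isPreconnected_connectedComponentIn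

theorem isOpen_unboundedComponent (hΓ : IsCompact Γ) : IsOpen (unboundedComponent Γ) := by
  rcases (unboundedComponent Γ).eq_empty_or_nonempty with h | ⟨a, ha⟩
  · rw [h]; exact isOpen_empty
  · rw [unboundedComponent_eq hΓ.isBounded ha]
    exact hΓ.isClosed.isOpen_compl.connectedComponentIn

theorem unboundedComponent_subset_compl : unboundedComponent Γ ⊆ Γᶜ := fun _ h => h.1

theorem subset_unboundedComponent (hΓ : IsBounded Γ) {a : ℂ} (ha : a ∈ unboundedComponent Γ)
    {F : Set ℂ} (hF : IsPreconnected F) (haF : a ∈ F) (hFΓ : F ⊆ Γᶜ) :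
    F ⊆ unboundedComponent Γ := by
  rw [unboundedComponent_eq hΓ ha]
  exact hF.subset_connectedComponentIn haF hFΓ

theorem compl_closedBall_subset_unboundedComponent {p : ℂ} {R : ℝ} (hR : 0 < R)
    (hΓ : Γ ⊆ closedBall p R) : (closedBall p R)ᶜ ⊆ unboundedComponent Γ := by
  intro z hz
  refine ⟨fun h => hz (hΓ h), fun hb => ?_⟩
  have h1 : (closedBall p R)ᶜ ⊆ connectedComponentIn Γᶜ z :=
    (isPreconnected_compl_closedBall p hR).subset_connectedComponentIn hz
      (compl_subset_compl.2 hΓ)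
  have h2 : IsBounded (univ : Set ℂ) := by
    rw [← union_compl_self (closedBall p R)]
    exact isBounded_closedBall.union (hb.subset h1)
  exact NormedSpace.unbounded_univ ℝ ℂ h2

theorem exists_norm_gt_subset_unboundedComponent (hΓ : IsBounded Γ) :
    ∃ R > 0, {z : ℂ | R < ‖z‖} ⊆ unboundedComponent Γ := by
  obtain ⟨R, hR, h⟩ := hΓ.exists_pos_norm_le
  refine ⟨R, hR, fun z hz => compl_closedBall_subset_unboundedComponent (p := 0) hR ?_ ?_⟩
  · intro w hw; simpa using h w hw
  · simpa using hz

theorem IsJordanCurve.subset_closure_unboundedComponent (hJ : IsJordanCurve Γ) :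
    Γ ⊆ closure (unboundedComponent Γ) := by
  obtain ⟨γ, hγ⟩ := hJ.exists_param
  have hK := hγ.isCompact
  intro z hz
  by_contra hcl
  obtain ⟨s, -, rfl⟩ := hγ.exists_eq 0 hz
  have hp := Real.pi_pos
  have hev : ∀ᶠ t in 𝓝 s, γ t ∈ (closure (unboundedComponent Γ))ᶜ :=
    hγ.continuous.continuousAt.eventually (isClosed_closure.isOpen_compl.mem_nhds hcl)
  obtain ⟨ε, hε, hball⟩ := Metric.eventually_nhds_iff_ball.1 hev
  set η := min (ε / 2) (Real.pi / 2)
  have hη : 0 < η := by positivity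
  have hη1 : η < ε := (min_le_left _ _).trans_lt (by linarith)
  have hη2 : η < Real.pi := (min_le_right _ _).trans_lt (by linarith)
  set A := γ '' Icc (s + η) (s + 2 * Real.pi - η)
  have hA : IsCompact A := isCompact_Icc.image hγ.continuous
  have hAΓ : A ⊆ Γ := by rintro _ ⟨t, -, rfl⟩; exact hγ.mem t
  have hsA : γ s ∉ A := by
    rintro ⟨t, ht, he⟩
    have := hγ.injOn s (x₁ := t) (x₂ := s) ⟨by linarith [ht.1], by linarith [ht.2]⟩
      ⟨le_rfl, by linarith⟩ he
    linarith [ht.1]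
  have hfr : Γ ∩ closure (unboundedComponent Γ) ⊆ A := by
    rintro _ ⟨hw, hwcl⟩
    obtain ⟨t, ht, rfl⟩ := hγ.exists_eq s hw
    refine ⟨t, ⟨?_, ?_⟩, rfl⟩
    · by_contra! h
      exact hball t (by rw [mem_ball, Real.dist_eq, abs_of_nonneg] <;> linarith [ht.1]) hwcl
    · by_contra! h
      refine hball (t - 2 * Real.pi) ?_ (by rwa [hγ.periodic.sub_eq])
      rw [mem_ball, Real.dist_eq, abs_of_neg] <;> linarith [ht.2]
  obtain ⟨R, -, hR⟩ := exists_norm_gt_subset_unboundedComponent hK.isBounded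
  obtain ⟨a, ha⟩ : ∃ a : ℂ, R < ‖a‖ := ⟨(|R| + 1 : ℝ), by
    rw [norm_real, Real.norm_eq_abs, abs_of_nonneg (by positivity)]
    linarith [le_abs_self R]⟩
  have haΩ := hR ha
  have haA : a ∉ A := fun h => haΩ.1 (hAΓ h)
  have hcomp : γ s ∈ connectedComponentIn Aᶜ a := by
    refine mem_connectedComponentIn_of_hasLogOn hA haA hsA ?_
    refine hasLogOn_arc (by linarith) hγ.continuous.continuousOn
      (hγ.injOn_Icc (by linarith)) ?_ ?_
    · refine ContinuousOn.div (by fun_prop) (by fun_prop) fun x hx => ?_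
      exact sub_ne_zero.2 fun e => hsA (e ▸ hx)
    · exact fun x hx => div_ne_zero (sub_ne_zero.2 fun e => haA (e ▸ hx))
        (sub_ne_zero.2 fun e => hsA (e ▸ hx))
  -- the connected set `connectedComponentIn Aᶜ a` is split by `Ω` and the exterior of `Ω`
  have hΩo := isOpen_unboundedComponent hK
  have hsub : connectedComponentIn Aᶜ a ⊆ unboundedComponent Γ := by
    refine isPreconnected_connectedComponentIn.subset_left_of_subset_union hΩo
      (isClosed_closure (s := unboundedComponent Γ)).isOpen_compl ?_ ?_ ?_
    · exact disjoint_compl_right.mono_left subset_closure |>.mono_right le_rfl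
    · intro x hx
      by_cases hxc : x ∈ closure (unboundedComponent Γ)
      · left
        by_contra hxΩ
        have hxf : x ∈ frontier (unboundedComponent Γ) := by
          rw [hΩo.frontier_eq]; exact ⟨hxc, hxΩ⟩
        rw [unboundedComponent_eq hK.isBounded haΩ] at hxf
        have hxΓ := frontier_connectedComponentIn_subset hK.isClosed a hxf
        exact connectedComponentIn_subset _ _ hx (hfr ⟨hxΓ, hxc⟩)
      · exact Or.inr hxc
    · exact ⟨a, mem_connectedComponentIn haA, haΩ⟩
  exact (hsub hcomp).1 hz

/-! ### Linear local connectivity of the exterior domain -/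

theorem IsQuasismooth.exists_preconnected_dist_gt {Λ : ℝ} (hq : IsQuasismooth Γ Λ)
    (hK : IsCompact Γ) {p a b : ℂ} {R : ℝ} (hR : 0 < R) (ha : a ∈ unboundedComponent Γ)
    (hb : b ∈ unboundedComponent Γ) (hap : (3 + 2 * Λ) * R < dist a p)
    (hbp : (3 + 2 * Λ) * R < dist b p) :
    ∃ F ⊆ unboundedComponent Γ, IsPreconnected F ∧ a ∈ F ∧ b ∈ F ∧ ∀ z ∈ F, R < dist z p := by
  have hL := hq.1
  set R₁ := (3 + 2 * Λ) * R
  have hR₁ : R ≤ R₁ := by simp only [R₁]; nlinarith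
  have h1 : HasLogOn Γ (fun x => (x - a) / (x - b)) :=
    hasLogOn_of_preconnected hK.isClosed (isPreconnected_unboundedComponent hK.isBounded)
      unboundedComponent_subset_compl ha hb
  have h2 : HasLogOn (closedBall p R₁) (fun x => (x - a) / (x - b)) :=
    hasLogOn_of_preconnected isClosed_closedBall
      (isPreconnected_compl_closedBall p (hR.trans_le hR₁)) le_rfl
      (by simpa using hap) (by simpa using hbp)
  have h3 : HasLogOn (Γ ∪ closedBall p R) (fun x => (x - a) / (x - b)) := by
    refine HasLogOn.union hK.isClosed isClosed_closedBall (closedBall_subset_closedBall hR₁) h1 h2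
      fun x hx y hy => ?_
    obtain ⟨J, hJ, hc, hxJ, hyJ, hJb⟩ := hq.exists_subarc_subset_closedBall hx.1 hy.1
    refine ⟨J, subset_inter hJ fun z hz => ?_, hc, hxJ, hyJ⟩
    have h4 : dist y x ≤ R + R :=
      (dist_triangle_right y x p).trans (add_le_add (mem_closedBall.1 hy.2) (mem_closedBall.1 hx.2))
    have h5 : dist z p ≤ (Λ + 1) * dist y x + R :=
      (dist_triangle z x p).trans (add_le_add (hJb hz) hx.2)
    rw [mem_closedBall]
    simp only [R₁]
    nlinarith
  have h4 := mem_connectedComponentIn_of_hasLogOn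
    (hK.union (isCompact_closedBall p R)) (a := a) (b := b)
    (by rintro (h | h); exacts [ha.1 h, absurd (mem_closedBall.1 h) (by linarith)])
    (by rintro (h | h); exacts [hb.1 h, absurd (mem_closedBall.1 h) (by linarith)]) h3
  have haF : a ∈ connectedComponentIn (Γ ∪ closedBall p R)ᶜ a := by
    refine mem_connectedComponentIn ?_
    rintro (h | h)
    exacts [ha.1 h, absurd (mem_closedBall.1 h) (by linarith)]
  have hFs := connectedComponentIn_subset (Γ ∪ closedBall p R)ᶜ a
  refine ⟨_, ?_, isPreconnected_connectedComponentIn, haF, h4, fun z hz => ?_⟩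
  · exact subset_unboundedComponent hK.isBounded ha isPreconnected_connectedComponentIn haF
      fun z hz h => hFs hz (Or.inl h)
  · by_contra! h
    exact hFs hz (Or.inr h)

theorem IsQuasismooth.exists_preconnected_dist_lt {Λ : ℝ} (hq : IsQuasismooth Γ Λ)
    (hJ : IsJordanCurve Γ) {p a b : ℂ} {R : ℝ} (hR : 0 < R) (ha : a ∈ unboundedComponent Γ)
    (hb : b ∈ unboundedComponent Γ) (hap : dist a p < R) (hbp : dist b p < R) :
    ∃ F ⊆ unboundedComponent Γ, IsPreconnected F ∧ a ∈ F ∧ b ∈ F ∧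
      ∀ z ∈ F, dist z p < (3 + 2 * Λ) * R := by
  obtain ⟨γ, hγ⟩ := hJ.exists_param
  have hK := hγ.isCompact
  have hL := hq.1
  set R₁ := (3 + 2 * Λ) * R
  have hR₁ : R < R₁ := by simp only [R₁]; nlinarith
  have h1 : HasLogOn Γ (fun x => (x - a) / (x - b)) :=
    hasLogOn_of_preconnected hK.isClosed (isPreconnected_unboundedComponent hK.isBounded)
      unboundedComponent_subset_compl ha hb
  have h2 : HasLogOn (ball p R)ᶜ (fun x => (x - a) / (x - b)) :=
    hasLogOn_of_preconnected isOpen_ball.isClosed_compl (convex_ball p R).isPreconnected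
      (by simp) hap hbp
  have h3 : HasLogOn (Γ ∪ sphere p R₁) (fun x => (x - a) / (x - b)) := by
    refine HasLogOn.union hK.isClosed isClosed_sphere (fun z hz => ?_) h1 h2
      fun x hx y hy => ?_
    · simp only [mem_compl_iff, mem_ball, not_lt, mem_sphere.1 hz]; exact hR₁.le
    rcases eq_or_ne x y with rfl | hxy
    · refine ⟨{x}, ?_, isPreconnected_singleton, rfl, rfl⟩
      rintro _ rfl
      exact ⟨hx.1, by simp only [mem_compl_iff, mem_ball, not_lt, mem_sphere.1 hx.2]; exact hR₁.le⟩
    obtain ⟨s, -, rfl⟩ := hγ.exists_eq 0 hx.1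
    obtain ⟨t, ht, rfl⟩ := hγ.exists_eq s hy.1
    have hpre : ∀ a b, IsPreconnected (γ '' Icc a b) := fun a b =>
      isPreconnected_Icc.image _ hγ.continuous.continuousOn
    by_cases hA : γ '' Icc s t ⊆ (ball p R)ᶜ
    · refine ⟨γ '' Icc s t, subset_inter ?_ hA, hpre _ _, ⟨s, ⟨le_rfl, ht.1⟩, rfl⟩,
        ⟨t, ⟨ht.1, le_rfl⟩, rfl⟩⟩
      rintro _ ⟨u, -, rfl⟩; exact hγ.mem u
    by_cases hB : γ '' Icc t (s + 2 * Real.pi) ⊆ (ball p R)ᶜ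
    · refine ⟨γ '' Icc t (s + 2 * Real.pi), subset_inter ?_ hB, hpre _ _,
        ⟨s + 2 * Real.pi, ⟨ht.2.le, le_rfl⟩, hγ.periodic s⟩, ⟨t, ⟨le_rfl, ht.2.le⟩, rfl⟩⟩
      rintro _ ⟨u, -, rfl⟩; exact hγ.mem u
    exfalso
    obtain ⟨u, hu, hu'⟩ := not_subset.1 hA
    obtain ⟨v, hv, hv'⟩ := not_subset.1 hB
    rw [mem_compl_iff, not_not, mem_ball] at hu' hv'
    have hΓ : ∀ a b, γ '' Icc a b ⊆ Γ := by rintro a b _ ⟨u, -, rfl⟩; exact hγ.mem u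
    obtain ⟨J, hJ, hc, huJ, hvJ, hJb⟩ :=
      hq.exists_subarc_subset_closedBall (hΓ _ _ hu) (hΓ _ _ hv)
    have hJR : ∀ z ∈ J, dist z p < R₁ := fun z hz => by
      have h4 : dist v u ≤ R + R := (dist_triangle_right v u p).trans (add_le_add hv'.le hu'.le)
      have h5 : dist z p ≤ (Λ + 1) * dist v u + dist u p :=
        (dist_triangle z u p).trans (add_le_add (hJb hz) le_rfl)
      simp only [R₁]
      nlinarith
    rcases hγ.endpoint_mem ht.1 ht.2 hc hJ ⟨u, huJ, hu⟩ ⟨v, hvJ, hv⟩ with h | h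
    · exact (hJR _ h).ne (mem_sphere.1 hx.2)
    · exact (hJR _ h).ne (mem_sphere.1 hy.2)
  have haN : a ∉ Γ ∪ sphere p R₁ := by
    rintro (h | h)
    exacts [ha.1 h, absurd (mem_sphere.1 h) (by linarith)]
  have hbN : b ∉ Γ ∪ sphere p R₁ := by
    rintro (h | h)
    exacts [hb.1 h, absurd (mem_sphere.1 h) (by linarith)]
  have h4 := mem_connectedComponentIn_of_hasLogOn
    (hK.union (isCompact_sphere p R₁)) haN hbN h3
  have haF := mem_connectedComponentIn (F := (Γ ∪ sphere p R₁)ᶜ) haN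
  have hFs := connectedComponentIn_subset (Γ ∪ sphere p R₁)ᶜ a
  refine ⟨_, ?_, isPreconnected_connectedComponentIn, haF, h4, ?_⟩
  · exact subset_unboundedComponent hK.isBounded ha isPreconnected_connectedComponentIn haF
      fun z hz h => hFs hz (Or.inl h)
  · refine isPreconnected_connectedComponentIn.subset_left_of_subset_union isOpen_ball
      (isClosed_closedBall (x := p) (ε := R₁)).isOpen_compl ?_ (fun z hz => ?_)
      ⟨a, haF, mem_ball.2 (hap.trans hR₁)⟩
    · exact disjoint_compl_right.mono_left ball_subset_closedBall
    · rcases lt_trichotomy (dist z p) R₁ with h | h | h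
      · exact Or.inl h
      · exact absurd (Or.inr h) (hFs hz)
      · exact Or.inr (by simpa using h)

end UnboundedComponent

/-! ### Injective holomorphic maps -/

section Univalent

variable {f : ℂ → ℂ} {U : Set ℂ}

theorem nhds_le_map_nhds_of_injOn (hU : IsOpen U) (hf : DifferentiableOn ℂ f U) (hi : InjOn f U)
    {z : ℂ} (hz : z ∈ U) : 𝓝 (f z) ≤ map f (𝓝 z) := by
  refine ((hf.analyticAt (hU.mem_nhds hz)).eventually_constant_or_nhds_le_map_nhds).resolve_left
    fun h => ?_
  obtain ⟨w, ⟨hw, hwU⟩, hwz⟩ :=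
    (((h.and (hU.mem_nhds hz)).filter_mono nhdsWithin_le_nhds).and
      (self_mem_nhdsWithin (a := z) (s := {z}ᶜ))).exists
  exact hwz (hi hwU hz hw)

theorem tendsto_invFunOn (hU : IsOpen U) (hf : DifferentiableOn ℂ f U) (hi : InjOn f U)
    {z : ℂ} (hz : z ∈ U) : Tendsto (Function.invFunOn f U) (𝓝 (f z)) (𝓝 z) := by
  refine (tendsto_map'_iff.2 ?_).mono_left (nhds_le_map_nhds_of_injOn hU hf hi hz)
  refine tendsto_id.congr' ?_
  filter_upwards [hU.mem_nhds hz] with y hy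
  exact (hi.leftInvOn_invFunOn hy).symm

theorem differentiableAt_invFunOn (hU : IsOpen U) (hf : DifferentiableOn ℂ f U) (hi : InjOn f U)
    {z : ℂ} (hz : z ∈ U) : DifferentiableAt ℂ (Function.invFunOn f U) (f z) := by
  set g := Function.invFunOn f U
  have hgf : ∀ y ∈ U, g (f y) = y := fun y hy => hi.leftInvOn_invFunOn hy
  have hcont : ∀ y ∈ U, ContinuousAt g (f y) := fun y hy => by
    have := tendsto_invFunOn hU hf hi hy
    rwa [ContinuousAt, hgf y hy]
  have himg : ∀ y ∈ U, ∀ᶠ w in 𝓝 (f y), w ∈ f '' U := fun y hy =>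
    nhds_le_map_nhds_of_injOn hU hf hi hy (image_mem_map (hU.mem_nhds hy))
  have hreg : ∀ y ∈ U, deriv f y ≠ 0 → DifferentiableAt ℂ g (f y) := fun y hy hd => by
    have h1 : HasDerivAt f (deriv f y) (g (f y)) := by
      rw [hgf y hy]; exact (hf.differentiableAt (hU.mem_nhds hy)).hasDerivAt
    refine (HasDerivAt.of_local_left_inverse (hcont y hy) h1 hd ?_).differentiableAt
    filter_upwards [himg y hy]
    rintro _ ⟨u, hu, rfl⟩
    rw [hgf u hu]
  have hd : AnalyticAt ℂ (deriv f) z := (hf.analyticAt (hU.mem_nhds hz)).deriv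
  rcases hd.eventually_eq_zero_or_eventually_ne_zero with h0 | hne
  · exfalso
    obtain ⟨ε, hε, hball⟩ := Metric.eventually_nhds_iff_ball.1 (h0.and (hU.mem_nhds hz))
    have hc : ∀ y ∈ ball z ε, f y = f z := fun y hy =>
      isOpen_ball.is_const_of_deriv_eq_zero (convex_ball z ε).isPreconnected
        (hf.mono fun w hw => (hball w hw).2) (fun w hw => (hball w hw).1) hy
        (mem_ball_self hε)
    have hm : ∀ᶠ w in 𝓝[≠] z, w ∈ ball z ε := nhdsWithin_le_nhds (ball_mem_nhds z hε)
    obtain ⟨w, hw, hwz⟩ := (hm.and (self_mem_nhdsWithin (a := z) (s := {z}ᶜ))).exists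
    exact hwz (hi (hball w hw).2 hz (hc w hw))
  · refine (analyticAt_of_differentiable_on_punctured_nhds_of_continuousAt ?_
      (hcont z hz)).differentiableAt
    rw [eventually_nhdsWithin_iff] at hne ⊢
    filter_upwards [(tendsto_invFunOn hU hf hi hz).eventually hne, himg z hz]
    rintro _ h1 ⟨u, hu, rfl⟩ hne'
    have hgu : Function.invFunOn f U (f u) = u := hgf u hu
    rw [hgu] at h1
    exact hreg u hu (h1 fun e => hne' (by rw [mem_singleton_iff.1 e]; rfl))

end Univalent

/-! ### The exterior conformal map and its inverse -/

namespace IsExtConformal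

variable {Γ : Set ℂ} {Φ : ℂ → ℂ}

theorem tendsto_norm {Ω : Set ℂ} (h : IsExtConformal Ω Φ) :
    Tendsto (fun z => ‖Φ z‖) (cobounded ℂ) atTop := by
  obtain ⟨c, hc, ht⟩ := h.2.2
  have h1 : Tendsto (fun z => ‖Φ z / z‖) (cobounded ℂ) (𝓝 c) := by
    have := ht.norm
    rwa [norm_real, Real.norm_eq_abs, abs_of_pos hc] at this
  refine (h1.pos_mul_atTop hc tendsto_norm_cobounded_atTop).congr' ?_
  filter_upwards [eventually_ne_cobounded (0:ℂ)] with z hz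
  rw [norm_div, div_mul_cancel₀ _ (norm_ne_zero_iff.2 hz)]

theorem differentiableOn_invFunOn (h : IsExtConformal (unboundedComponent Γ) Φ)
    (hΓ : IsCompact Γ) :
    DifferentiableOn ℂ (Function.invFunOn Φ (unboundedComponent Γ)) extDisk := by
  intro w hw
  obtain ⟨z, hz, rfl⟩ := h.2.1.surjOn hw
  exact (differentiableAt_invFunOn (isOpen_unboundedComponent hΓ) h.1 h.2.1.injOn
    hz).differentiableWithinAt

/-- The conformal map is bounded on bounded sets. -/
theorem exists_norm_le (h : IsExtConformal (unboundedComponent Γ) Φ)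
    (hΓ : IsCompact Γ) (R : ℝ) :
    ∃ M, ∀ z ∈ unboundedComponent Γ, ‖z‖ ≤ R → ‖Φ z‖ ≤ M := by
  obtain ⟨R₀, hR₀, hsub⟩ := exists_norm_gt_subset_unboundedComponent hΓ.isBounded
  set R₁ := max R (R₀ + 1)
  have hsph : sphere (0:ℂ) R₁ ⊆ unboundedComponent Γ := fun z hz => hsub (by
    change R₀ < ‖z‖
    rw [mem_sphere_zero_iff_norm.1 hz]
    linarith [le_max_right R (R₀ + 1)])
  obtain ⟨M, hM⟩ := (isCompact_sphere (0:ℂ) R₁).exists_bound_of_continuousOn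
    (h.1.continuousOn.mono hsph)
  set M' := max M 1
  refine ⟨M', fun z hz hzR => ?_⟩
  by_contra! hlt
  set Ψ := Function.invFunOn Φ (unboundedComponent Γ)
  have hinv := h.2.1.invOn_invFunOn
  have hS : {w : ℂ | M' < ‖w‖} ⊆ extDisk := fun w hw => (le_max_right M 1).trans_lt hw
  have hpre : IsPreconnected (Ψ '' {w : ℂ | M' < ‖w‖}) :=
    (isPreconnected_norm_gt (zero_lt_one.trans_le (le_max_right M 1))).image _
      ((h.differentiableOn_invFunOn hΓ).continuousOn.mono hS)
  obtain ⟨y, hy1, hy2⟩ := ((h.tendsto_norm.eventually (eventually_gt_atTop M')).and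
    (tendsto_norm_cobounded_atTop.eventually (eventually_gt_atTop R₁))).exists
  have hyΩ : y ∈ unboundedComponent Γ := hsub (by
    change R₀ < ‖y‖; linarith [le_max_right R (R₀ + 1)])
  have hmem : ∀ u ∈ unboundedComponent Γ, M' < ‖Φ u‖ → u ∈ Ψ '' {w : ℂ | M' < ‖w‖} :=
    fun u hu hu' => ⟨Φ u, hu', hinv.1 hu⟩
  obtain ⟨v, hv, hvR⟩ : R₁ ∈ (fun u => ‖u‖) '' (Ψ '' {w : ℂ | M' < ‖w‖}) :=
    hpre.intermediate_value (hmem z hz hlt) (hmem y hyΩ hy1) continuous_norm.continuousOn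
      ⟨hzR.trans (le_max_left _ _), hy2.le⟩
  obtain ⟨w, hw, rfl⟩ := hv
  have h1 := hM (Ψ w) (mem_sphere_zero_iff_norm.2 hvR)
  rw [hinv.2 (hS hw)] at h1
  exact absurd (h1.trans (le_max_left M 1)) (not_le.2 hw)

theorem isCompact_image_invFunOn (h : IsExtConformal (unboundedComponent Γ) Φ)
    (hΓ : IsCompact Γ) {K : Set ℂ} (hK : IsCompact K)
    (hKs : K ⊆ extDisk) : IsCompact (Function.invFunOn Φ (unboundedComponent Γ) '' K) :=
  hK.image_of_continuousOn ((h.differentiableOn_invFunOn hΓ).continuousOn.mono hKs)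

theorem image_invFunOn_subset (h : IsExtConformal (unboundedComponent Γ) Φ)
    {K : Set ℂ} (hKs : K ⊆ extDisk) :
    Function.invFunOn Φ (unboundedComponent Γ) '' K ⊆ unboundedComponent Γ := by
  rintro _ ⟨w, hw, rfl⟩
  exact h.2.1.surjOn.mapsTo_invFunOn (hKs hw)

/-- Every point of `Γ` is a limit of points of the exterior domain at which `‖Φ‖` tends to `1`. -/
theorem exists_near (h : IsExtConformal (unboundedComponent Γ) Φ)
    (hJ : IsJordanCurve Γ) {z : ℂ} (hz : z ∈ Γ) {ε η : ℝ} (hε : 0 < ε)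
    (hη : 0 < η) : ∃ u ∈ unboundedComponent Γ, dist u z < ε ∧ ‖Φ u‖ < 1 + η := by
  obtain ⟨γ, hγ⟩ := hJ.exists_param
  have hΓ := hγ.isCompact
  obtain ⟨M, hM⟩ := h.exists_norm_le hΓ (‖z‖ + ε)
  set K : Set ℂ := closedBall 0 M ∩ {w | 1 + η ≤ ‖w‖}
  have hK : IsCompact K := (isCompact_closedBall _ _).inter_right
    (isClosed_le continuous_const continuous_norm)
  have hKs : K ⊆ extDisk := fun w hw => by
    have : 1 + η ≤ ‖w‖ := hw.2
    change 1 < ‖w‖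
    linarith
  have hzK : z ∈ (Function.invFunOn Φ (unboundedComponent Γ) '' K)ᶜ := fun hzK =>
    (h.image_invFunOn_subset hKs hzK).1 hz
  have hop := (h.isCompact_image_invFunOn hΓ hK hKs).isClosed.isOpen_compl
  obtain ⟨u, ⟨hu1, hu2⟩, hu⟩ := mem_closure_iff.1 (hJ.subset_closure_unboundedComponent hz) _
    (hop.inter isOpen_ball) ⟨hzK, mem_ball_self hε⟩
  refine ⟨u, hu, hu2, ?_⟩
  by_contra! hle
  refine hu1 ⟨Φ u, ⟨?_, hle⟩, h.2.1.invOn_invFunOn.1 hu⟩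
  rw [mem_closedBall_zero_iff]
  refine hM u hu ?_
  have : ‖u‖ ≤ ‖z‖ + dist u z := by
    rw [dist_eq_norm]; exact norm_le_norm_add_norm_sub z u |>.trans (by rw [norm_sub_rev])
  linarith [mem_ball.1 hu2]

theorem isCompact_levelCurve (h : IsExtConformal (unboundedComponent Γ) Φ)
    (hΓ : IsCompact Γ) {δ : ℝ} (hδ : 0 < δ) :
    IsCompact (levelCurve (unboundedComponent Γ) Φ δ) := by
  have hs : sphere (0:ℂ) (1 + δ) ⊆ extDisk := fun w hw => by
    change 1 < ‖w‖
    rw [mem_sphere_zero_iff_norm.1 hw]; linarith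
  convert h.isCompact_image_invFunOn hΓ (isCompact_sphere (0:ℂ) (1 + δ)) hs using 1
  ext z
  constructor
  · rintro ⟨hz, hz'⟩
    exact ⟨Φ z, mem_sphere_zero_iff_norm.2 hz', h.2.1.invOn_invFunOn.1 hz⟩
  · rintro ⟨w, hw, rfl⟩
    refine ⟨h.2.1.surjOn.mapsTo_invFunOn (hs hw), ?_⟩
    rw [h.2.1.invOn_invFunOn.2 (hs hw), mem_sphere_zero_iff_norm.1 hw]

theorem nonempty_levelCurve (h : IsExtConformal (unboundedComponent Γ) Φ)
    {δ : ℝ} (hδ : 0 < δ) :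
    (levelCurve (unboundedComponent Γ) Φ δ).Nonempty := by
  have h1 : ‖((1 + δ : ℝ) : ℂ)‖ = 1 + δ := by
    rw [norm_real, Real.norm_eq_abs, abs_of_pos (by linarith)]
  obtain ⟨z, hz, hz'⟩ := h.2.1.surjOn (show ((1 + δ : ℝ) : ℂ) ∈ extDisk by
    change 1 < ‖_‖; rw [h1]; linarith)
  exact ⟨z, hz, by rw [hz', h1]⟩

theorem rho_pos (h : IsExtConformal (unboundedComponent Γ) Φ)
    (hΓ : IsCompact Γ) {δ : ℝ} (hδ : 0 < δ) {z : ℂ} (hz : z ∈ Γ) :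
    0 < rho (unboundedComponent Γ) Φ δ z :=
  ((h.isCompact_levelCurve hΓ hδ).isClosed.notMem_iff_infDist_pos (h.nonempty_levelCurve hδ)).1
    fun hz' => hz'.1.1 hz

theorem exists_rho_le (h : IsExtConformal (unboundedComponent Γ) Φ)
    (hΓ : IsCompact Γ) :
    ∃ R > 0, ∀ δ, 0 < δ → δ ≤ 1 → ∀ z ∈ Γ, rho (unboundedComponent Γ) Φ δ z ≤ R := by
  obtain ⟨R₁, hR₁⟩ : ∃ R₁ : ℝ, ∀ z : ℂ, R₁ < ‖z‖ → 2 < ‖Φ z‖ := by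
    have := h.tendsto_norm.eventually (eventually_gt_atTop 2)
    rw [← comap_norm_atTop, eventually_comap] at this
    obtain ⟨R₁, hR₁⟩ := eventually_atTop.1 this
    exact ⟨R₁, fun z hz => hR₁ _ hz.le z rfl⟩
  obtain ⟨R₂, hR₂, hb⟩ := hΓ.isBounded.exists_pos_norm_le
  refine ⟨R₂ + |R₁|, by positivity, fun δ hδ hδ1 z hz => ?_⟩
  obtain ⟨y, hy⟩ := h.nonempty_levelCurve hδ
  have hy1 : ‖y‖ ≤ R₁ := by
    by_contra! hlt
    have := hR₁ y hlt
    rw [hy.2] at this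
    linarith
  refine (infDist_le_dist_of_mem hy).trans ?_
  rw [dist_eq_norm]
  exact (norm_sub_le _ _).trans (add_le_add (hb z hz) (hy1.trans (le_abs_self _)))

end IsExtConformal

/-! ### A length-area estimate -/

/-- The primitive of the radial density `logDensity`. -/
def logLog (t : ℝ) : ℝ := Real.log (Real.log (Real.exp 1 + t ^ 2))

/-- A radial density on the plane with finite square integral and infinite integral along rays. -/
def logDensity (t : ℝ) : ℝ := 2 * t / ((Real.exp 1 + t ^ 2) * Real.log (Real.exp 1 + t ^ 2))

theorem one_le_log_exp_one_add_sq (t : ℝ) : 1 ≤ Real.log (Real.exp 1 + t ^ 2) := by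
  rw [Real.le_log_iff_exp_le (by positivity)]
  nlinarith [sq_nonneg t]

theorem continuous_logDensity : Continuous logDensity := by
  unfold logDensity
  refine Continuous.div (by fun_prop) (Continuous.mul (by fun_prop)
    (Continuous.log (by fun_prop) fun t => by positivity)) fun t => ?_
  have := one_le_log_exp_one_add_sq t
  have := Real.exp_pos 1
  positivity

theorem logLog_mono {s t : ℝ} (hs : 0 ≤ s) (hst : s ≤ t) : logLog s ≤ logLog t := by
  have h1 := one_le_log_exp_one_add_sq s
  unfold logLog
  gcongr

theorem tendsto_logLog : Tendsto logLog atTop atTop := by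
  refine Real.tendsto_log_atTop.comp (Real.tendsto_log_atTop.comp ?_)
  exact tendsto_atTop_add_const_left _ _ (tendsto_pow_atTop two_ne_zero)

theorem hasDerivAt_inv_log (t : ℝ) :
    HasDerivAt (fun t : ℝ => -2 / Real.log (Real.exp 1 + t ^ 2))
      (4 * t / ((Real.exp 1 + t ^ 2) * Real.log (Real.exp 1 + t ^ 2) ^ 2)) t := by
  have h1 := one_le_log_exp_one_add_sq t
  have hpos : 0 < Real.exp 1 + t ^ 2 := by positivity
  have h2 : HasDerivAt (fun t : ℝ => Real.exp 1 + t ^ 2) (2 * t) t := by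
    simpa using (hasDerivAt_pow 2 t).const_add (Real.exp 1)
  have h3 := (h2.log hpos.ne').inv (by linarith)
  simp only [div_eq_mul_inv (-2 : ℝ)]
  refine (h3.const_mul (-2)).congr_deriv ?_
  field_simp
  ring

theorem lintegral_Ioi_logDensity :
    ∫⁻ t in Ioi (0:ℝ), ENNReal.ofReal
      (4 * t / ((Real.exp 1 + t ^ 2) * Real.log (Real.exp 1 + t ^ 2) ^ 2)) = ENNReal.ofReal 2 := by
  have hlim : Tendsto (fun t : ℝ => -2 / Real.log (Real.exp 1 + t ^ 2)) atTop (𝓝 0) := by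
    refine Tendsto.const_div_atTop ?_ _
    exact Real.tendsto_log_atTop.comp
      (tendsto_atTop_add_const_left _ _ (tendsto_pow_atTop two_ne_zero))
  have hnn : ∀ t ∈ Ioi (0:ℝ),
      0 ≤ 4 * t / ((Real.exp 1 + t ^ 2) * Real.log (Real.exp 1 + t ^ 2) ^ 2) := fun t ht => by
    have : (0:ℝ) < t := ht
    positivity
  rw [← ofReal_integral_eq_lintegral_ofReal]
  · rw [integral_Ioi_of_hasDerivAt_of_nonneg' (fun t _ => hasDerivAt_inv_log t) hnn hlim]
    norm_num
  · exact integrableOn_Ioi_deriv_of_nonneg' (fun t _ => hasDerivAt_inv_log t) hnn hlim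
  · exact (ae_restrict_iff' measurableSet_Ioi).2 (Eventually.of_forall hnn)

theorem lintegral_logDensity_sq_le :
    ∫⁻ y : ℂ, ENNReal.ofReal (logDensity ‖y‖ ^ 2) ≤ ENNReal.ofReal (4 * Real.pi) := by
  rw [← Complex.lintegral_comp_polarCoord_symm, _root_.polarCoord_target]
  set h : ℝ → ℝ := fun t => 4 * t / ((Real.exp 1 + t ^ 2) * Real.log (Real.exp 1 + t ^ 2) ^ 2)
  have hle : ∀ p ∈ Ioi (0:ℝ) ×ˢ Ioo (-Real.pi) Real.pi,
      ENNReal.ofReal p.1 • ENNReal.ofReal (logDensity ‖Complex.polarCoord.symm p‖ ^ 2) ≤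
        ENNReal.ofReal (h p.1) * 1 := fun p hp => by
    have hp0 : 0 < p.1 := hp.1
    have h1 := one_le_log_exp_one_add_sq p.1
    have h2 : 0 < Real.exp 1 := Real.exp_pos 1
    rw [norm_polarCoord_symm, abs_of_pos hp0, smul_eq_mul, ← ENNReal.ofReal_mul hp0.le, mul_one]
    refine ENNReal.ofReal_le_ofReal ?_
    simp only [h, logDensity]
    rw [div_pow, ← mul_div_assoc, div_le_div_iff₀ (by positivity) (by positivity)]
    have h3 : p.1 ^ 2 ≤ Real.exp 1 + p.1 ^ 2 := by linarith
    have h4 := mul_le_mul_of_nonneg_left h3 (show 0 ≤ 4 * p.1 * (Real.exp 1 + p.1 ^ 2) *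
      Real.log (Real.exp 1 + p.1 ^ 2) ^ 2 by positivity)
    nlinarith
  have hm : Measurable h := by
    simp only [h]
    fun_prop
  refine (setLIntegral_mono' (measurableSet_Ioi.prod measurableSet_Ioo) hle).trans ?_
  rw [Measure.volume_eq_prod, ← Measure.prod_restrict,
    lintegral_prod_mul (f := fun t => ENNReal.ofReal (h t)) (g := fun _ => 1)
      (by fun_prop) (by fun_prop), lintegral_Ioi_logDensity]
  simp only [lintegral_const, MeasurableSet.univ, Measure.restrict_apply, univ_inter,
    Real.volume_Ioo, one_mul]
  rw [← ENNReal.ofReal_mul (by norm_num)]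
  exact ENNReal.ofReal_le_ofReal (by linarith)

theorem lintegral_deriv_mul_logDensity_sq_le {f : ℂ → ℂ} {U : Set ℂ} (hU : IsOpen U)
    (hf : DifferentiableOn ℂ f U) (hi : InjOn f U) :
    ∫⁻ z in U, ENNReal.ofReal ((‖deriv f z‖ * logDensity ‖f z‖) ^ 2) ≤
      ENNReal.ofReal (4 * Real.pi) := by
  let f' : ℂ → ℂ →L[ℝ] ℂ := fun z =>
    (ContinuousLinearMap.toSpanSingleton ℂ (deriv f z)).restrictScalars ℝ
  have hf' : ∀ z ∈ U, HasFDerivWithinAt f (f' z) U z := fun z hz =>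
    ((hf.differentiableAt (hU.mem_nhds hz)).hasDerivAt.hasFDerivAt.restrictScalars
      ℝ).hasFDerivWithinAt
  have hdet : ∀ z, |(f' z).det| = ‖deriv f z‖ ^ 2 := fun z => by
    simp [f', ContinuousLinearMap.det, LinearMap.det_restrictScalars,
      Algebra.norm_complex_eq, Complex.normSq_eq_norm_sq]
  have key := lintegral_image_eq_lintegral_abs_det_fderiv_mul volume hU.measurableSet hf' hi
    (fun y => ENNReal.ofReal (logDensity ‖y‖ ^ 2))
  calc _ = ∫⁻ z in U, ENNReal.ofReal |(f' z).det| * ENNReal.ofReal (logDensity ‖f z‖ ^ 2) := by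
        refine lintegral_congr fun z => ?_
        rw [hdet, ← ENNReal.ofReal_mul (by positivity), mul_pow]
    _ = _ := key.symm
    _ ≤ ∫⁻ y : ℂ, ENNReal.ofReal (logDensity ‖y‖ ^ 2) := setLIntegral_le_lintegral _ _
    _ ≤ _ := lintegral_logDensity_sq_le

theorem abs_logLog_sub_le_lintegral {f : ℂ → ℂ} {U : Set ℂ} (hU : IsOpen U)
    (hf : DifferentiableOn ℂ f U) {c : ℂ} {r s t : ℝ} (hr : 0 ≤ r) (hst : s ≤ t)
    (harc : ∀ θ ∈ Icc s t, circleMap c r θ ∈ U) :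
    ENNReal.ofReal |logLog ‖f (circleMap c r t)‖ - logLog ‖f (circleMap c r s)‖| ≤
      ∫⁻ θ in Icc s t, ENNReal.ofReal
        (r * (‖deriv f (circleMap c r θ)‖ * logDensity ‖f (circleMap c r θ)‖)) := by
  set F : ℝ → ℂ := fun θ => f (circleMap c r θ)
  have hfc : ContDiffOn ℝ 1 f U := (hf.contDiffOn hU).restrict_scalars ℝ
  have hF : ContDiffOn ℝ 1 F (Icc s t) :=
    hfc.comp ((contDiff_circleMap c r).contDiffOn) harc
  have hpos : ∀ x : ℝ, 0 < Real.exp 1 + ‖F x‖ ^ 2 := fun x => by positivity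
  have hg : ContDiffOn ℝ 1 (fun θ => logLog ‖F θ‖) (Icc s t) := by
    unfold logLog
    refine ContDiffOn.log (ContDiffOn.log (contDiffOn_const.add (hF.norm_sq ℝ)) fun x _ =>
      (hpos x).ne') fun x _ => ?_
    have := one_le_log_exp_one_add_sq ‖F x‖
    positivity
  have h1 := enorm_sub_le_lintegral_deriv_of_contDiffOn_Icc hg hst
  rw [← ofReal_norm, Real.norm_eq_abs] at h1
  refine h1.trans (setLIntegral_mono' measurableSet_Icc fun θ hθ => ?_)
  rw [← ofReal_norm, Real.norm_eq_abs]
  refine ENNReal.ofReal_le_ofReal ?_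
  have hd : HasDerivAt F (deriv f (circleMap c r θ) * (circleMap 0 r θ * I)) θ :=
    (hf.differentiableAt (hU.mem_nhds (harc θ hθ))).hasDerivAt.comp_of_eq θ
      (hasDerivAt_circleMap c r θ) rfl
  have hl := one_le_log_exp_one_add_sq ‖F θ‖
  have hgd : HasDerivAt (fun θ => logLog ‖F θ‖) _ θ :=
    ((hd.norm_sq.const_add (Real.exp 1)).log (hpos θ).ne').log (by linarith)
  rw [hgd.deriv, abs_div, abs_div, abs_of_pos (hpos θ), abs_of_pos (zero_lt_one.trans_le hl),
    div_div, abs_mul, abs_two, logDensity, ← mul_div_assoc, ← mul_div_assoc]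
  have h2 : |inner ℝ (F θ) (deriv f (circleMap c r θ) * (circleMap 0 r θ * I))| ≤
      ‖F θ‖ * (‖deriv f (circleMap c r θ)‖ * r) := by
    refine (abs_real_inner_le_norm _ _).trans (le_of_eq ?_)
    rw [norm_mul, norm_mul, norm_I, mul_one, norm_circleMap_zero, abs_of_nonneg hr]
  refine div_le_div_of_nonneg_right ?_ (mul_pos (hpos θ) (zero_lt_one.trans_le hl)).le
  change 2 * |inner ℝ (F θ) _| ≤ r * (‖_‖ * (2 * ‖F θ‖))
  nlinarith

theorem sq_lintegral_le {α : Type*} [MeasurableSpace α] {μ : Measure α} {g : α → ℝ≥0∞}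
    (hg : AEMeasurable g μ) : (∫⁻ x, g x ∂μ) ^ 2 ≤ μ univ * ∫⁻ x, g x ^ 2 ∂μ := by
  have h := ENNReal.lintegral_mul_le_Lp_mul_Lq μ Real.HolderConjugate.two_two
    (f := fun _ => 1) (g := g) aemeasurable_const hg
  simp only [Pi.mul_apply, one_mul, ENNReal.one_rpow, lintegral_const] at h
  calc (∫⁻ x, g x ∂μ) ^ 2 ≤ (μ univ ^ (1 / 2 : ℝ) * (∫⁻ x, g x ^ (2:ℝ) ∂μ) ^ (1 / 2 : ℝ)) ^ 2 := by
        gcongr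
    _ = _ := by
        rw [mul_pow, ← ENNReal.rpow_natCast, ← ENNReal.rpow_natCast, ← ENNReal.rpow_mul,
          ← ENNReal.rpow_mul]
        norm_num

/-- A circle centred at a nonnegative real number meets `extDisk` in an arc about angle zero. -/
theorem circleMap_mem_extDisk {C r : ℝ} (hC : 0 ≤ C) (hr : 0 ≤ r) {s t θ : ℝ}
    (hs : s ∈ Ioc (-Real.pi) Real.pi) (ht : t ∈ Ioc (-Real.pi) Real.pi) (hθ : θ ∈ Icc s t)
    (hs' : circleMap C r s ∈ extDisk) (ht' : circleMap C r t ∈ extDisk) :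
    circleMap C r θ ∈ extDisk := by
  have hn : ∀ x : ℝ, ‖circleMap C r x‖ ^ 2 = C ^ 2 + r ^ 2 + 2 * C * r * Real.cos x := fun x => by
    rw [← Complex.normSq_eq_norm_sq, Complex.normSq_apply, circleMap, add_re, add_im, ofReal_re,
      ofReal_im, re_ofReal_mul, im_ofReal_mul, exp_ofReal_mul_I_re, exp_ofReal_mul_I_im]
    nlinarith [Real.sin_sq_add_cos_sq x]
  have key : ∀ x, |θ| ≤ |x| → |x| ≤ Real.pi → circleMap C r x ∈ extDisk →
      circleMap C r θ ∈ extDisk := fun x h1 h2 hx => by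
    have h3 := Real.cos_le_cos_of_nonneg_of_le_pi (abs_nonneg θ) h2 h1
    rw [Real.cos_abs, Real.cos_abs] at h3
    have h4 : ‖circleMap C r x‖ ^ 2 ≤ ‖circleMap C r θ‖ ^ 2 := by
      rw [hn, hn]
      have := mul_le_mul_of_nonneg_left h3 (show 0 ≤ 2 * C * r by positivity)
      linarith
    exact lt_of_lt_of_le (show 1 < ‖_‖ from hx)
      ((pow_le_pow_iff_left₀ (norm_nonneg _) (norm_nonneg _) two_ne_zero).1 h4)
  have := Real.pi_pos
  rcases le_total |s| |t| with h | h
  · refine key t (abs_le.2 ⟨?_, ?_⟩) (abs_le.2 ⟨ht.1.le, ht.2⟩) ht'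
    · have := (abs_le.1 h).1; linarith [hθ.1]
    · exact hθ.2.trans (le_abs_self t)
  · refine key s (abs_le.2 ⟨?_, ?_⟩) (abs_le.2 ⟨hs.1.le, hs.2⟩) hs'
    · have := neg_abs_le s; linarith [hθ.1]
    · have := (abs_le.1 h).2; linarith [hθ.2]

theorem isOpen_extDisk : IsOpen extDisk := isOpen_lt continuous_const continuous_norm

section LengthArea

variable {f : ℂ → ℂ}

theorem sq_logLog_sub_le (hf : DifferentiableOn ℂ f extDisk) {C r : ℝ} (hC : 0 ≤ C) (hr : 0 < r)
    {u v : ℂ} (hu : u ∈ extDisk) (hv : v ∈ extDisk) (hur : dist u C = r) (hvr : dist v C = r) :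
    ENNReal.ofReal ((logLog ‖f u‖ - logLog ‖f v‖) ^ 2) ≤
      ENNReal.ofReal (2 * Real.pi * r ^ 2) * ∫⁻ θ in Ioo (-Real.pi) Real.pi,
        extDisk.indicator (fun w => ENNReal.ofReal ((‖deriv f w‖ * logDensity ‖f w‖) ^ 2))
          (circleMap C r θ) := by
  have hpar : ∀ w : ℂ, dist w C = r →
      arg (w - C) ∈ Ioc (-Real.pi) Real.pi ∧ circleMap C r (arg (w - C)) = w := fun w hw => by
    refine ⟨arg_mem_Ioc _, ?_⟩
    rw [circleMap, ← hw, dist_eq_norm, norm_mul_exp_arg_mul_I]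
    ring
  obtain ⟨hs, hs'⟩ := hpar u hur
  obtain ⟨ht, ht'⟩ := hpar v hvr
  generalize arg (u - C) = s at hs hs'
  generalize arg (v - C) = t at ht ht'
  subst hs' ht'
  wlog hst : s ≤ t generalizing s t
  · rw [← neg_sub, neg_sq]
    exact this t ht s hs hv hvr hu hur (le_of_not_ge hst)
  have harc : ∀ θ ∈ Icc s t, circleMap C r θ ∈ extDisk := fun θ hθ =>
    circleMap_mem_extDisk hC hr.le hs ht hθ hu hv
  have h1 := abs_logLog_sub_le_lintegral isOpen_extDisk hf hr.le hst harc
  have hcont : ContinuousOn (fun θ => r * (‖deriv f (circleMap C r θ)‖ *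
      logDensity ‖f (circleMap C r θ)‖)) (Icc s t) := by
    have hc : ContinuousOn (circleMap C r) (Icc s t) := (continuous_circleMap C r).continuousOn
    refine continuousOn_const.mul (ContinuousOn.mul ?_ ?_)
    · exact ((hf.deriv isOpen_extDisk).continuousOn.comp hc harc).norm
    · exact continuous_logDensity.comp_continuousOn ((hf.continuousOn.comp hc harc).norm)
  have h2 := sq_lintegral_le (μ := volume.restrict (Icc s t))
    (hcont.aemeasurable measurableSet_Icc).ennreal_ofReal
  rw [Measure.restrict_apply_univ, Real.volume_Icc] at h2
  calc ENNReal.ofReal ((logLog ‖f (circleMap C r s)‖ - logLog ‖f (circleMap C r t)‖) ^ 2)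
      = ENNReal.ofReal |logLog ‖f (circleMap C r t)‖ - logLog ‖f (circleMap C r s)‖| ^ 2 := by
        rw [← ENNReal.ofReal_pow (abs_nonneg _), sq_abs, ← neg_sub, neg_sq]
    _ ≤ _ := by gcongr
    _ ≤ _ := h2
    _ ≤ ENNReal.ofReal (2 * Real.pi) * ∫⁻ θ in Icc s t, ENNReal.ofReal (r ^ 2) *
        extDisk.indicator (fun w => ENNReal.ofReal ((‖deriv f w‖ * logDensity ‖f w‖) ^ 2))
          (circleMap C r θ) := by
        refine mul_le_mul' (ENNReal.ofReal_le_ofReal (by linarith [hs.1, ht.2])) ?_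
        refine setLIntegral_mono' measurableSet_Icc fun θ hθ => ?_
        rw [indicator_of_mem (harc θ hθ), ← ENNReal.ofReal_mul (by positivity), ← mul_pow,
          ENNReal.ofReal_pow]
        have : 0 ≤ logDensity ‖f (circleMap C r θ)‖ := by
          have := one_le_log_exp_one_add_sq ‖f (circleMap C r θ)‖
          unfold logDensity
          positivity
        positivity
    _ = ENNReal.ofReal (2 * Real.pi * r ^ 2) * ∫⁻ θ in Icc s t,
        extDisk.indicator (fun w => ENNReal.ofReal ((‖deriv f w‖ * logDensity ‖f w‖) ^ 2))
          (circleMap C r θ) := by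
        rw [lintegral_const_mul' _ _ ENNReal.ofReal_ne_top, ← mul_assoc,
          ← ENNReal.ofReal_mul (by positivity)]
    _ ≤ _ := by
        gcongr 1
        rw [restrict_Ioo_eq_restrict_Ioc]
        exact lintegral_mono_set fun θ hθ => ⟨hs.1.trans_le hθ.1, hθ.2.trans ht.2⟩

theorem measurable_indicator_density (hf : DifferentiableOn ℂ f extDisk) :
    Measurable (extDisk.indicator
      (fun w => ENNReal.ofReal ((‖deriv f w‖ * logDensity ‖f w‖) ^ 2))) := by
  classical
  rw [← piecewise_eq_indicator]
  refine ContinuousOn.measurable_piecewise ?_ continuousOn_const isOpen_extDisk.measurableSet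
  refine ENNReal.continuous_ofReal.comp_continuousOn (ContinuousOn.pow (ContinuousOn.mul ?_ ?_) 2)
  · exact (hf.deriv isOpen_extDisk).continuousOn.norm
  · exact continuous_logDensity.comp_continuousOn hf.continuousOn.norm

theorem length_area_of_nonneg_center (hf : DifferentiableOn ℂ f extDisk) (hi : InjOn f extDisk)
    {C r₁ r₂ : ℝ} (hC : 0 ≤ C) (hr₁ : 0 ≤ r₁) (hr : r₁ < r₂) {T₁ T₂ : ℝ} (hT₁ : 0 ≤ T₁)
    (hT : T₁ ≤ T₂)
    (H : ∀ r ∈ Ioo r₁ r₂, ∃ u ∈ extDisk, ∃ v ∈ extDisk, dist u C = r ∧ dist v C = r ∧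
      ‖f u‖ ≤ T₁ ∧ T₂ ≤ ‖f v‖) :
    (logLog T₂ - logLog T₁) ^ 2 * (r₂ - r₁) ≤ 8 * Real.pi ^ 2 * r₂ := by
  set L := logLog T₂ - logLog T₁
  have hL : 0 ≤ L := sub_nonneg.2 (logLog_mono hT₁ hT)
  have hr₂ : 0 < r₂ := hr₁.trans_lt hr
  have hpi := Real.pi_pos
  set D := extDisk.indicator (fun w => ENNReal.ofReal ((‖deriv f w‖ * logDensity ‖f w‖) ^ 2))
  have hDm : Measurable D := measurable_indicator_density hf
  have harea : ∫⁻ z : ℂ, D (C + z) ≤ ENNReal.ofReal (4 * Real.pi) := by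
    rw [lintegral_add_left_eq_self D (C : ℂ), lintegral_indicator isOpen_extDisk.measurableSet]
    exact lintegral_deriv_mul_logDensity_sq_le isOpen_extDisk hf hi
  have hcm : ∀ p : ℝ × ℝ, C + Complex.polarCoord.symm p = circleMap C p.1 p.2 := fun p => by
    rw [Complex.polarCoord_symm_apply, circleMap, exp_mul_I, ofReal_cos, ofReal_sin]
  have hmeas : Measurable fun p : ℝ × ℝ => ENNReal.ofReal p.1 * D (circleMap C p.1 p.2) := by
    refine (ENNReal.measurable_ofReal.comp measurable_fst).mul (hDm.comp ?_)
    unfold circleMap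
    fun_prop
  have hpolar : ∫⁻ r in Ioi (0:ℝ), ∫⁻ θ in Ioo (-Real.pi) Real.pi,
      ENNReal.ofReal r * D (circleMap C r θ) ≤ ENNReal.ofReal (4 * Real.pi) := by
    rw [← Complex.lintegral_comp_polarCoord_symm, _root_.polarCoord_target,
      Measure.volume_eq_prod, ← Measure.prod_restrict] at harea
    simp only [smul_eq_mul, hcm] at harea
    rwa [lintegral_prod _ hmeas.aemeasurable] at harea
  have hrad : ∀ r ∈ Ioo r₁ r₂, ENNReal.ofReal (L ^ 2 / (2 * Real.pi * r₂)) ≤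
      ∫⁻ θ in Ioo (-Real.pi) Real.pi, ENNReal.ofReal r * D (circleMap C r θ) := fun r hr' => by
    have hr0 : 0 < r := hr₁.trans_lt hr'.1
    obtain ⟨u, hu, v, hv, hur, hvr, hfu, hfv⟩ := H r hr'
    have h1 := sq_logLog_sub_le hf hC hr0 hv hu hvr hur
    have h2 : L ≤ logLog ‖f v‖ - logLog ‖f u‖ :=
      sub_le_sub (logLog_mono (hT₁.trans hT) hfv) (logLog_mono (norm_nonneg _) hfu)
    have h3 : ENNReal.ofReal (L ^ 2) ≤ _ :=
      (ENNReal.ofReal_le_ofReal (pow_le_pow_left₀ hL h2 2)).trans h1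
    rw [lintegral_const_mul' _ _ ENNReal.ofReal_ne_top]
    calc ENNReal.ofReal (L ^ 2 / (2 * Real.pi * r₂))
        ≤ ENNReal.ofReal (1 / (2 * Real.pi * r)) * ENNReal.ofReal (L ^ 2) := by
          rw [← ENNReal.ofReal_mul (by positivity)]
          refine ENNReal.ofReal_le_ofReal ?_
          rw [one_div_mul_eq_div]
          have := hr'.2.le
          gcongr
      _ ≤ _ := mul_le_mul_right h3 _
      _ = _ := by
          rw [← mul_assoc, ← ENNReal.ofReal_mul (by positivity)]
          congr 2
          field_simp
  have hfin : ENNReal.ofReal (L ^ 2 / (2 * Real.pi * r₂)) * ENNReal.ofReal (r₂ - r₁) ≤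
      ENNReal.ofReal (4 * Real.pi) := by
    calc _ = ∫⁻ r in Ioo r₁ r₂, ENNReal.ofReal (L ^ 2 / (2 * Real.pi * r₂)) := by
          rw [setLIntegral_const, Real.volume_Ioo]
      _ ≤ _ := setLIntegral_mono' measurableSet_Ioo hrad
      _ ≤ _ := lintegral_mono_set fun r hr' => hr₁.trans_lt hr'.1
      _ ≤ _ := hpolar
  rw [← ENNReal.ofReal_mul (by positivity), ENNReal.ofReal_le_ofReal_iff (by positivity),
    div_mul_eq_mul_div, div_le_iff₀ (by positivity)] at hfin
  linarith

/-- Length-area estimate: if each circle about `c` with radius in `(r₁, r₂)` contains a point mapped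
into a disk and a point mapped outside of a larger concentric disk, then the ratio of the radii of
the disks is controlled by `r₂ / (r₂ - r₁)`. -/
theorem length_area (hf : DifferentiableOn ℂ f extDisk) (hi : InjOn f extDisk)
    {c q : ℂ} {r₁ r₂ : ℝ} (hr₁ : 0 ≤ r₁) (hr : r₁ < r₂) {R₁ R₂ : ℝ} (hR₁ : 0 < R₁)
    (hR : R₁ ≤ R₂)
    (H : ∀ r ∈ Ioo r₁ r₂, ∃ u ∈ extDisk, ∃ v ∈ extDisk, dist u c = r ∧ dist v c = r ∧
      dist (f u) q ≤ R₁ ∧ R₂ ≤ dist (f v) q) :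
    (logLog (R₂ / R₁) - logLog 1) ^ 2 * (r₂ - r₁) ≤ 8 * Real.pi ^ 2 * r₂ := by
  set e : ℂ := exp (arg c * I)
  have he : ‖e‖ = 1 := norm_exp_ofReal_mul_I _
  have he0 : e ≠ 0 := exp_ne_zero _
  have hce : c = e * ‖c‖ := by rw [mul_comm]; exact (norm_mul_exp_arg_mul_I c).symm
  have hmaps : ∀ w ∈ extDisk, e * w ∈ extDisk := fun w hw => by
    change 1 < ‖e * w‖
    rw [norm_mul, he, one_mul]; exact hw
  have hR₁' : (R₁ : ℂ) ≠ 0 := by exact_mod_cast hR₁.ne'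
  have hback : ∀ w ∈ extDisk, e⁻¹ * w ∈ extDisk := fun w hw => by
    change 1 < ‖e⁻¹ * w‖
    rw [norm_mul, norm_inv, he, inv_one, one_mul]; exact hw
  have hdist : ∀ w, dist (e⁻¹ * w) ‖c‖ = dist w c := fun w => by
    rw [dist_eq_norm, dist_eq_norm]
    conv_rhs => rw [hce]
    rw [show w - e * ‖c‖ = e * (e⁻¹ * w - ‖c‖) by field_simp, norm_mul, he, one_mul]
  have hval : ∀ w, ‖(f (e * (e⁻¹ * w)) - q) / R₁‖ = dist (f w) q / R₁ := fun w => by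
    rw [mul_inv_cancel_left₀ he0, norm_div, dist_eq_norm, norm_real, Real.norm_eq_abs,
      abs_of_pos hR₁]
  refine length_area_of_nonneg_center (f := fun w => (f (e * w) - q) / R₁) ?_ ?_
    (norm_nonneg c) hr₁ hr zero_le_one ((one_le_div hR₁).2 hR) fun r hr' => ?_
  · exact ((hf.comp (by fun_prop) hmaps).sub_const q).div_const _
  · intro x hx y hy hxy
    have h1 : f (e * x) = f (e * y) := by
      have := (div_left_inj' hR₁').1 hxy
      exact sub_left_injective this
    exact mul_left_cancel₀ he0 (hi (hmaps x hx) (hmaps y hy) h1)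
  · obtain ⟨u, hu, v, hv, hur, hvr, h1, h2⟩ := H r hr'
    refine ⟨e⁻¹ * u, hback u hu, e⁻¹ * v, hback v hv, (hdist u).trans hur, (hdist v).trans hvr,
      ?_, ?_⟩
    · rw [hval, div_le_one hR₁]; exact h1
    · rw [hval]; gcongr

end LengthArea

/-! ### Quasisymmetry of the exterior conformal map -/

theorem IsPreconnected.exists_dist_eq {F : Set ℂ} (hF : IsPreconnected F) {u v c : ℂ}
    (hu : u ∈ F) (hv : v ∈ F) {r : ℝ} (hur : dist u c ≤ r) (hvr : r ≤ dist v c) :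
    ∃ w ∈ F, dist w c = r :=
  hF.intermediate_value hu hv (f := fun w => dist w c) (by fun_prop) ⟨hur, hvr⟩

theorem dist_midpoint_sq (a b x : ℂ) :
    dist x ((a + b) / 2) ^ 2 = (dist x a ^ 2 + dist x b ^ 2) / 2 - (dist a b / 2) ^ 2 := by
  have h (z w : ℂ) : dist z w ^ 2 = (z.re - w.re) ^ 2 + (z.im - w.im) ^ 2 := by
    rw [dist_eq_norm, ← normSq_eq_norm_sq, normSq_apply, sub_re, sub_im]
    ring
  have h2 : dist a b / 2 * (dist a b / 2) = dist a b ^ 2 / 4 := by ring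
  rw [pow_two (dist a b / 2), h2, h, h, h, h]
  simp only [div_ofNat_re, div_ofNat_im, add_re, add_im]
  ring

theorem dist_left_midpoint' (a b : ℂ) : dist a ((a + b) / 2) = dist a b / 2 := by
  rw [dist_eq_norm, dist_eq_norm, show a - (a + b) / 2 = (a - b) / 2 by ring, norm_div]
  simp

theorem dist_right_midpoint' (a b : ℂ) : dist b ((a + b) / 2) = dist a b / 2 := by
  rw [add_comm, dist_left_midpoint', dist_comm]

/-- An annulus that is crossed by every connected set joining `x` to `b` and by every connected set
joining `a` to infinity. -/
theorem exists_annulus {K : ℝ} (hK : 0 < K) {x a b : ℂ} (hxb : x ≠ b)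
    (h : dist x a ≤ K * dist x b) :
    ∃ c : ℂ, ∃ r₁ r₂ : ℝ, 0 ≤ r₁ ∧ 0 < r₂ ∧ √(1 + 2 / K ^ 2) * r₁ ≤ r₂ ∧ dist a c ≤ r₁ ∧
      (dist x c ≤ r₁ ∧ r₂ ≤ dist b c ∨ dist b c ≤ r₁ ∧ r₂ ≤ dist x c) := by
  have hd : 0 < dist x b := dist_pos.2 hxb
  have key : ∀ {r₁ r₂ : ℝ}, 0 ≤ r₁ → 0 ≤ r₂ → 2 * r₁ ≤ K * dist x b →
      r₁ ^ 2 + dist x b ^ 2 / 2 ≤ r₂ ^ 2 → 0 < r₂ ∧ √(1 + 2 / K ^ 2) * r₁ ≤ r₂ := by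
    intro r₁ r₂ h1 h2 h3 h4
    refine ⟨lt_of_le_of_ne h2 fun h0 => ?_, ?_⟩
    · rw [← h0] at h4
      nlinarith [sq_nonneg r₁]
    · refine le_of_sq_le_sq ?_ h2
      rw [mul_pow, Real.sq_sqrt (by positivity)]
      have h5 : 2 / K ^ 2 * r₁ ^ 2 ≤ dist x b ^ 2 / 2 := by
        rw [div_mul_eq_mul_div, div_le_iff₀ (by positivity)]
        have := pow_le_pow_left₀ (by positivity) h3 2
        nlinarith
      linarith
  rcases le_total (dist x a) (dist a b) with hc | hc
  · refine ⟨(a + x) / 2, dist a x / 2, dist b ((a + x) / 2), by positivity, ?_⟩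
    obtain ⟨h1, h2⟩ := key (r₁ := dist a x / 2) (r₂ := dist b ((a + x) / 2)) (by positivity)
      dist_nonneg (by rw [dist_comm a x]; linarith) (by
        rw [dist_midpoint_sq, dist_comm b a, dist_comm b x, dist_comm a x]
        have := pow_le_pow_left₀ dist_nonneg hc 2
        nlinarith)
    exact ⟨h1, h2, (dist_left_midpoint' a x).le, Or.inl ⟨(dist_right_midpoint' a x).le, le_rfl⟩⟩
  · refine ⟨(a + b) / 2, dist a b / 2, dist x ((a + b) / 2), by positivity, ?_⟩
    obtain ⟨h1, h2⟩ := key (r₁ := dist a b / 2) (r₂ := dist x ((a + b) / 2)) (by positivity)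
      dist_nonneg (by linarith) (by
        rw [dist_midpoint_sq]
        have := pow_le_pow_left₀ dist_nonneg hc 2
        nlinarith)
    exact ⟨h1, h2, (dist_left_midpoint' a b).le, Or.inr ⟨(dist_right_midpoint' a b).le, le_rfl⟩⟩

namespace IsExtConformal

variable {Γ : Set ℂ} {Λ : ℝ} {Φ : ℂ → ℂ}

/-- The inverse of the exterior conformal map of a quasismooth curve is quasisymmetric. -/
theorem quasisymmetric (hΦ : IsExtConformal (unboundedComponent Γ) Φ) (hJ : IsJordanCurve Γ)
    (hq : IsQuasismooth Γ Λ) {K : ℝ} (hK : 0 < K) :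
    ∃ H : ℝ, 0 < H ∧ ∀ x ∈ unboundedComponent Γ, ∀ a ∈ unboundedComponent Γ,
      ∀ b ∈ unboundedComponent Γ, x ≠ b → dist (Φ x) (Φ a) ≤ K * dist (Φ x) (Φ b) →
      dist x a ≤ H * dist x b := by
  obtain ⟨γ, hγ⟩ := hJ.exists_param
  have hcpt := hγ.isCompact
  set s := √(1 + 2 / K ^ 2)
  have hs : 1 < s := Real.lt_sqrt_of_sq_lt (by have : 0 < 2 / K ^ 2 := by positivity
                                               linarith)
  have hs' : 0 < 1 - 1 / s := by rw [sub_pos, div_lt_one (by positivity)]; exact hs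
  obtain ⟨T, hT, hT1⟩ := ((tendsto_logLog.eventually_gt_atTop
    (logLog 1 + √(8 * Real.pi ^ 2 / (1 - 1 / s)))).and (eventually_ge_atTop 1)).exists
  have hT2 : 8 * Real.pi ^ 2 < (logLog T - logLog 1) ^ 2 * (1 - 1 / s) := by
    rw [← div_lt_iff₀ hs']
    exact Real.lt_sq_of_sqrt_lt (by linarith)
  set κ := 3 + 2 * Λ
  have hκ : 5 ≤ κ := by have := hq.1; linarith
  refine ⟨T * (4 * κ ^ 2), by positivity, fun x hx a ha b hb hxb h => ?_⟩
  by_contra! hlt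
  have hdb : 0 < dist x b := dist_pos.2 hxb
  set R₁ := κ * (2 * dist x b)
  set R₂ := dist x a / (2 * κ)
  have hR₁ : 0 < R₁ := by positivity
  have hTR : T ≤ R₂ / R₁ := by
    rw [le_div_iff₀ hR₁, le_div_iff₀ (by positivity)]
    simp only [R₁]
    linarith
  have hR : R₁ ≤ R₂ := (one_le_div hR₁).1 (hT1.trans hTR)
  have hR₂ : 0 < R₂ := hR₁.trans_le hR
  have hda : 0 < dist x a := by
    have : R₂ * (2 * κ) = dist x a := div_mul_cancel₀ _ (by positivity)
    rw [← this]; positivity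
  have hκR : κ * R₂ = dist x a / 2 := by simp only [R₂]; field_simp
  obtain ⟨c, r₁, r₂, hr₁, hr₂, hr, hac, hxbc⟩ := exists_annulus hK (hΦ.2.1.injOn.ne hx hb hxb) h
  obtain ⟨R, -, hRsub⟩ := exists_norm_gt_subset_unboundedComponent hcpt.isBounded
  obtain ⟨y, hy1, hy2, hy3⟩ := ((hΦ.tendsto_norm.eventually_ge_atTop (‖c‖ + r₂)).and
    ((tendsto_norm_cobounded_atTop.eventually_gt_atTop R).and
      (tendsto_norm_cobounded_atTop.eventually_gt_atTop (‖x‖ + dist x a)))).exists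
  have hyΩ : y ∈ unboundedComponent Γ := hRsub hy2
  have hyx : dist x a < dist y x := by
    rw [dist_eq_norm y x]
    linarith [norm_sub_norm_le y x]
  have hyc : r₂ ≤ dist (Φ y) c := by
    rw [dist_eq_norm (Φ y) c]
    linarith [norm_sub_norm_le (Φ y) c]
  obtain ⟨F₁, hF₁Ω, hF₁, hxF, hbF, hF₁R⟩ := hq.exists_preconnected_dist_lt hJ
    (show 0 < 2 * dist x b by positivity) hx hb (p := x) (by rw [dist_self]; positivity)
    (by rw [dist_comm]; linarith)
  obtain ⟨F₂, hF₂Ω, hF₂, haF, hyF, hF₂R⟩ := hq.exists_preconnected_dist_gt hcpt hR₂ ha hyΩ (p := x)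
    (by change κ * R₂ < _; rw [hκR, dist_comm a x]; linarith)
    (by change κ * R₂ < _; rw [hκR]; linarith)
  have hinv := hΦ.2.1.invOn_invFunOn.1
  have hcont := hΦ.1.continuousOn
  have hlt' : r₁ < r₂ := by
    rcases hr₁.eq_or_lt with h0 | h0
    · rwa [← h0]
    · nlinarith
  have hmain := length_area (hΦ.differentiableOn_invFunOn hcpt)
    (hΦ.2.1.invOn_invFunOn.2.injOn) (c := c) (q := x) hr₁ hlt' hR₁ hR fun r hrr => by
      obtain ⟨_, ⟨u, hu, rfl⟩, hur⟩ : ∃ w ∈ Φ '' F₁, dist w c = r := by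
        have hF := hF₁.image Φ (hcont.mono hF₁Ω)
        rcases hxbc with ⟨h1, h2⟩ | ⟨h1, h2⟩
        · exact hF.exists_dist_eq (mem_image_of_mem Φ hxF) (mem_image_of_mem Φ hbF)
            (h1.trans hrr.1.le) (hrr.2.le.trans h2)
        · exact hF.exists_dist_eq (mem_image_of_mem Φ hbF) (mem_image_of_mem Φ hxF)
            (h1.trans hrr.1.le) (hrr.2.le.trans h2)
      obtain ⟨_, ⟨v, hv, rfl⟩, hvr⟩ : ∃ w ∈ Φ '' F₂, dist w c = r :=
        (hF₂.image Φ (hcont.mono hF₂Ω)).exists_dist_eq (mem_image_of_mem Φ haF)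
          (mem_image_of_mem Φ hyF) (hac.trans hrr.1.le) (hrr.2.le.trans hyc)
      refine ⟨Φ u, hΦ.2.1.mapsTo (hF₁Ω hu), Φ v, hΦ.2.1.mapsTo (hF₂Ω hv), hur, hvr, ?_, ?_⟩
      · rw [hinv (hF₁Ω hu)]; exact (hF₁R u hu).le
      · rw [hinv (hF₂Ω hv)]; exact (hF₂R v hv).le
  have h1 : (logLog T - logLog 1) ^ 2 ≤ (logLog (R₂ / R₁) - logLog 1) ^ 2 := by
    have := logLog_mono zero_le_one hT1
    have := logLog_mono (zero_le_one.trans hT1) hTR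
    refine pow_le_pow_left₀ ?_ ?_ 2 <;> linarith
  have h2 : r₂ * (1 - 1 / s) ≤ r₂ - r₁ := by
    have : r₁ ≤ r₂ / s := by rw [le_div_iff₀ (by positivity)]; linarith
    rw [mul_sub, mul_one, mul_one_div]; linarith
  have h3 := mul_le_mul h1 h2 (by positivity) (sq_nonneg _)
  have h4 := mul_lt_mul_of_pos_right hT2 hr₂
  linarith

theorem exists_dist_le_half (hΦ : IsExtConformal (unboundedComponent Γ) Φ)
    (hJ : IsJordanCurve Γ) (hq : IsQuasismooth Γ Λ) :
    ∃ M : ℝ, 0 < M ∧ ∀ x ∈ unboundedComponent Γ, ∀ a ∈ unboundedComponent Γ,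
      ∀ b ∈ unboundedComponent Γ, M * dist (Φ x) (Φ a) ≤ dist (Φ x) (Φ b) →
      2 * dist x a ≤ dist x b := by
  obtain ⟨H, hH, hqs⟩ := hΦ.quasisymmetric hJ hq one_pos
  set η : ℝ := 1 / (2 * H ^ 2)
  have hη : 0 < η := by positivity
  obtain ⟨t, -, htf, ht⟩ := (isCompact_closedBall (0:ℂ) H).finite_cover_balls (half_pos hη)
  lift t to Finset ℂ using htf
  refine ⟨4 ^ (t.card + 1), by positivity, fun x hx a ha b hb h => ?_⟩
  by_contra! hlt
  have hxa : x ≠ a := by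
    rintro rfl
    rw [dist_self, mul_zero] at hlt
    exact hlt.not_ge dist_nonneg
  have hXA : 0 < dist (Φ x) (Φ a) := dist_pos.2 (hΦ.2.1.injOn.ne hx ha hxa)
  have hD : 0 < dist (Φ x) (Φ b) := lt_of_lt_of_le (by positivity) h
  have hxb : x ≠ b := by
    rintro rfl
    rw [dist_self] at hD
    exact hD.false
  have hdb : 0 < dist x b := dist_pos.2 hxb
  set D := dist (Φ x) (Φ b)
  have hX : 1 < ‖Φ x‖ := hΦ.2.1.mapsTo hx
  have hX0 : 0 < ‖Φ x‖ := one_pos.trans hX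
  let B : ℕ → ℂ := fun i => Φ x * ((1 + D / 4 ^ i / ‖Φ x‖ : ℝ) : ℂ)
  have hB : ∀ i, B i ∈ extDisk := fun i => by
    change 1 < ‖Φ x * _‖
    rw [norm_mul, norm_real, Real.norm_of_nonneg (by positivity), mul_add, mul_div_cancel₀ _ hX0.ne',
      mul_one]
    have : 0 < D / 4 ^ i := by positivity
    linarith
  have hBB : ∀ i j, dist (B i) (B j) = |D / 4 ^ i - D / 4 ^ j| := fun i j => by
    rw [dist_eq_norm, ← mul_sub, ← ofReal_sub, norm_mul, norm_real, Real.norm_eq_abs,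
      add_sub_add_left_eq_sub, ← sub_div, abs_div, abs_of_pos hX0, mul_div_cancel₀ _ hX0.ne']
  have hXB : ∀ i, dist (Φ x) (B i) = D / 4 ^ i := fun i => by
    rw [dist_comm, dist_eq_norm, ← mul_sub_one, ← ofReal_one, ← ofReal_sub, norm_mul, norm_real,
      add_sub_cancel_left, Real.norm_of_nonneg (by positivity), mul_div_cancel₀ _ hX0.ne']
  choose p hp hΦp using fun i => hΦ.2.1.surjOn (hB i)
  have hpx : ∀ i, x ≠ p i := fun i hi => by
    have h1 := hXB i
    rw [← hΦp, ← hi, dist_self] at h1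
    have : 0 < D / 4 ^ i := by positivity
    linarith
  have hball : ∀ i, dist x (p i) ≤ H * dist x b := fun i => by
    refine hqs x hx _ (hp i) b hb hxb ?_
    rw [hΦp, hXB, one_mul]
    exact div_le_self hD.le (one_le_pow₀ (by norm_num))
  have hsep : ∀ i j, i < j → j ≤ t.card + 1 → dist x a ≤ H ^ 2 * dist (p j) (p i) :=
    fun i j hij hj => by
      have h4 : (4:ℝ) * (D / 4 ^ j) ≤ D / 4 ^ i := by
        have : (4:ℝ) ^ (i + 1) ≤ 4 ^ j := pow_le_pow_right₀ (by norm_num) hij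
        rw [← mul_div_assoc, div_le_div_iff₀ (by positivity) (by positivity)]
        rw [pow_succ] at this
        nlinarith
      have hDj : 0 < D / 4 ^ j := by positivity
      have h1 : dist x a ≤ H * dist x (p j) := by
        refine hqs x hx a ha _ (hp j) (hpx j) ?_
        rw [hΦp, hXB, one_mul, le_div_iff₀ (by positivity), mul_comm]
        refine le_trans ?_ h
        gcongr
        norm_num
      have hne : p j ≠ p i := fun he => by
        have h5 := hXB i
        rw [← hΦp, ← he, hΦp, hXB] at h5
        linarith
      have h2 : dist (p j) x ≤ H * dist (p j) (p i) := by
        refine hqs _ (hp j) x hx _ (hp i) hne ?_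
        rw [hΦp, hΦp, dist_comm, hXB, hBB, one_mul]
        refine le_trans ?_ (neg_le_abs _)
        linarith
      rw [dist_comm] at h2
      calc dist x a ≤ H * (H * dist (p j) (p i)) := h1.trans (by gcongr)
        _ = _ := by ring
  let w : ℕ → ℂ := fun i => (p i - x) / (dist x b : ℂ)
  have hdw : ∀ i j, dist (w i) (w j) = dist (p i) (p j) / dist x b := fun i j => by
    rw [dist_eq_norm, ← sub_div, norm_div, norm_real, Real.norm_of_nonneg dist_nonneg,
      sub_sub_sub_cancel_right, dist_eq_norm (p i)]
  have hw : ∀ i, ∃ y ∈ t, dist (w i) y < η / 2 := fun i => by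
    have : w i ∈ closedBall (0:ℂ) H := by
      rw [mem_closedBall_zero_iff, norm_div, norm_real, Real.norm_of_nonneg dist_nonneg,
        div_le_iff₀ hdb, ← dist_eq_norm, dist_comm]
      exact hball i
    obtain ⟨y, hy, hyw⟩ := mem_iUnion₂.1 (ht this)
    exact ⟨y, hy, hyw⟩
  choose g hgt hg using hw
  obtain ⟨i, hi, j, hj, hij, hgij⟩ := Finset.exists_ne_map_eq_of_card_lt_of_maps_to
    (s := Finset.range (t.card + 1)) (t := t) (f := g) (by simp) (fun i _ => hgt i)
  have hclose : dist (w i) (w j) < η := by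
    have h1 := hg i
    have h2 := hg j
    rw [← hgij, dist_comm] at h2
    linarith [dist_triangle (w i) (g i) (w j)]
  rw [hdw, div_lt_iff₀ hdb] at hclose
  have hfar : dist x a ≤ H ^ 2 * dist (p i) (p j) := by
    rcases hij.lt_or_gt with h1 | h1
    · rw [dist_comm (p i)]
      exact hsep i j h1 (Finset.mem_range.1 hj).le
    · exact hsep j i h1 (Finset.mem_range.1 hi).le
  have h5 : H ^ 2 * dist (p i) (p j) < H ^ 2 * (η * dist x b) := by gcongr
  have h6 : H ^ 2 * (η * dist x b) = dist x b / 2 := by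
    simp only [η]
    field_simp
  linarith

end IsExtConformal

namespace IsExtConformal

variable {Γ : Set ℂ} {Λ : ℝ} {Φ : ℂ → ℂ}

/-- The distances to a level curve are comparable at points of the curve that are close relative to
these distances. -/
theorem exists_rho_le_mul_rho (hΦ : IsExtConformal (unboundedComponent Γ) Φ)
    (hJ : IsJordanCurve Γ) (hq : IsQuasismooth Γ Λ) :
    ∃ C : ℝ, 0 < C ∧ ∀ δ > 0, ∀ z ∈ Γ, ∀ ζ ∈ Γ,
      dist ζ z ≤ rho (unboundedComponent Γ) Φ δ z →
      rho (unboundedComponent Γ) Φ δ z ≤ C * rho (unboundedComponent Γ) Φ δ ζ := by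
  obtain ⟨γ, hγ⟩ := hJ.exists_param
  have hcpt := hγ.isCompact
  obtain ⟨M, hM, hpack⟩ := hΦ.exists_dist_le_half hJ hq
  obtain ⟨H, hH, hqs⟩ := hΦ.quasisymmetric hJ hq (show 0 < 2 * M by positivity)
  refine ⟨3 + 2 * H, by positivity, fun δ hδ z hz ζ hζ hle => ?_⟩
  have hS := hΦ.rho_pos hcpt hδ hz
  have ht := hΦ.rho_pos hcpt hδ hζ
  obtain ⟨p, hp, hpt⟩ : ∃ p ∈ levelCurve (unboundedComponent Γ) Φ δ,
      rho (unboundedComponent Γ) Φ δ ζ = dist ζ p :=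
    (hΦ.isCompact_levelCurve hcpt hδ).exists_infDist_eq_dist (hΦ.nonempty_levelCurve hδ) ζ
  have hlip : rho (unboundedComponent Γ) Φ δ z ≤ rho (unboundedComponent Γ) Φ δ ζ + dist z ζ :=
    infDist_le_infDist_add_dist
  have hSy : ∀ y ∈ levelCurve (unboundedComponent Γ) Φ δ,
      rho (unboundedComponent Γ) Φ δ z ≤ dist z y := fun y hy => infDist_le_dist_of_mem hy
  set S := rho (unboundedComponent Γ) Φ δ z
  set t := rho (unboundedComponent Γ) Φ δ ζ
  set ε := min t (S / 8)
  have hε : 0 < ε := lt_min ht (by positivity)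
  have hεt : ε ≤ t := min_le_left _ _
  have hεS : ε ≤ S / 8 := min_le_right _ _
  obtain ⟨u, hu, huz, hΦu⟩ := hΦ.exists_near hJ hz hε hδ
  obtain ⟨v, hv, hvζ, hΦv⟩ := hΦ.exists_near hJ hζ hε (half_pos hδ)
  have hΦu1 : 1 < ‖Φ u‖ := hΦ.2.1.mapsTo hu
  have hΦu0 : 0 < ‖Φ u‖ := one_pos.trans hΦu1
  have hnorm : ‖Φ u * (((1 + δ) / ‖Φ u‖ : ℝ) : ℂ)‖ = 1 + δ := by
    rw [norm_mul, norm_real, Real.norm_of_nonneg (by positivity), mul_div_cancel₀ _ hΦu0.ne']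
  obtain ⟨y, hy, hΦy⟩ := hΦ.2.1.surjOn (show Φ u * (((1 + δ) / ‖Φ u‖ : ℝ) : ℂ) ∈ extDisk by
    change 1 < ‖_‖
    rw [hnorm]; linarith)
  have hyL : y ∈ levelCurve (unboundedComponent Γ) Φ δ := ⟨hy, by rw [hΦy, hnorm]⟩
  have hΦyu : dist (Φ u) (Φ y) ≤ δ := by
    have h1 : 0 ≤ (1 + δ) / ‖Φ u‖ - 1 := by
      rw [sub_nonneg, one_le_div hΦu0]; exact hΦu.le
    rw [dist_comm, dist_eq_norm, hΦy, ← mul_sub_one, ← ofReal_one, ← ofReal_sub, norm_mul,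
      norm_real, Real.norm_of_nonneg h1, mul_sub, mul_one, mul_div_cancel₀ _ hΦu0.ne']
    linarith
  have huv : dist u v ≤ S + 2 * ε := by
    have h1 := dist_triangle4 u z ζ v
    rw [dist_comm ζ v, dist_comm z ζ] at h1
    linarith
  have hzζ : dist z ζ ≤ dist v u + 2 * ε := by
    have h1 := dist_triangle4 z u v ζ
    rw [dist_comm z u, dist_comm u v] at h1
    linarith
  have hΦuv : dist (Φ u) (Φ v) < M * δ := by
    by_contra! hcon
    have h1 := hpack u hu y hy v hv (le_trans (by gcongr) hcon)
    have h2 := hSy y hyL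
    have h3 := dist_triangle z u y
    rw [dist_comm z u] at h3
    linarith
  have hΦvp : δ / 2 ≤ dist (Φ v) (Φ p) := by
    have h1 := norm_sub_norm_le (Φ p) (Φ v)
    rw [← dist_eq_norm, hp.2, dist_comm] at h1
    linarith
  have hvp : v ≠ p := by
    rintro rfl
    rw [dist_self] at hΦvp
    linarith
  have h1 : dist v u ≤ H * dist v p := by
    refine hqs v hv u hu p hp.1 hvp ?_
    rw [dist_comm (Φ v) (Φ u)]
    nlinarith
  have h2 : dist v p ≤ 2 * t := by
    have := dist_triangle v ζ p
    linarith
  have h3 := mul_le_mul_of_nonneg_left h2 hH.le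
  linarith

end IsExtConformal

/-! ### Integrals of functions with quadratic decay -/

theorem setLIntegral_le_of_quadratic_decay {α : Type*} [PseudoMetricSpace α] [MeasurableSpace α]
    {μ : Measure α} {s : Set α} {ζ : α} {A : ℝ} (hA : 0 ≤ A)
    (hμ : ∀ R > 0, μ (s ∩ closedBall ζ R) ≤ ENNReal.ofReal (A * R)) {g : α → ℝ} {B ρ : ℝ}
    (hρ : 0 < ρ) (hB : 0 ≤ B) (h₁ : ∀ z ∈ s, g z ≤ B)
    (h₂ : ∀ z ∈ s, g z * dist z ζ ^ 2 ≤ B * ρ ^ 2) :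
    ∫⁻ z in s, ENNReal.ofReal (g z) ∂μ ≤ ENNReal.ofReal (8 * A * B * ρ) := by
  let E : ℕ → Set α := fun k => {z ∈ s ∩ closedBall ζ (2 ^ k * ρ) | g z ≤ 4 * B / 4 ^ k}
  have hcover : s ⊆ ⋃ k, E k := fun z hz => by
    have hex : ∃ k : ℕ, dist z ζ ≤ 2 ^ k * ρ := by
      obtain ⟨k, hk⟩ := pow_unbounded_of_one_lt (dist z ζ / ρ) (one_lt_two (α := ℝ))
      exact ⟨k, ((div_lt_iff₀ hρ).1 hk).le⟩
    classical
    refine mem_iUnion.2 ⟨Nat.find hex, ⟨hz, Nat.find_spec hex⟩, ?_⟩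
    rcases hk : Nat.find hex with - | k
    · rw [pow_zero, div_one]
      linarith [h₁ z hz]
    · have h3 : 2 ^ k * ρ < dist z ζ := not_le.1 (Nat.find_min hex (hk ▸ k.lt_succ_self))
      rw [pow_succ, mul_comm 4 B, mul_div_mul_right _ _ (by norm_num : (4:ℝ) ≠ 0),
        le_div_iff₀ (by positivity)]
      rcases le_or_gt (g z) 0 with h4 | h4
      · exact (mul_nonpos_of_nonpos_of_nonneg h4 (by positivity)).trans hB
      · have h5 : (2 ^ k * ρ) ^ 2 ≤ dist z ζ ^ 2 := by gcongr
        have h6 := (mul_le_mul_of_nonneg_left h5 h4.le).trans (h₂ z hz)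
        rw [mul_pow, ← pow_mul, mul_comm k 2, pow_mul, ← mul_assoc] at h6
        norm_num at h6
        exact le_of_mul_le_mul_right h6 (by positivity)
  have hE : ∀ k, ∫⁻ z in E k, ENNReal.ofReal (g z) ∂μ ≤
      ENNReal.ofReal (4 * A * B * ρ * (1 / 2) ^ k) := fun k =>
    calc _ ≤ ∫⁻ z in E k, ENNReal.ofReal (4 * B / 4 ^ k) ∂μ :=
          setLIntegral_mono measurable_const fun z hz => ENNReal.ofReal_le_ofReal hz.2
      _ ≤ ENNReal.ofReal (4 * B / 4 ^ k) * ENNReal.ofReal (A * (2 ^ k * ρ)) := by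
          rw [setLIntegral_const]
          gcongr
          exact (measure_mono fun z hz => hz.1).trans (hμ _ (by positivity))
      _ = _ := by
          rw [← ENNReal.ofReal_mul (by positivity)]
          congr 1
          rw [show (4:ℝ) ^ k = 2 ^ k * 2 ^ k by rw [← mul_pow]; norm_num, one_div, inv_pow]
          field_simp
  calc _ ≤ ∫⁻ z in ⋃ k, E k, ENNReal.ofReal (g z) ∂μ := lintegral_mono_set hcover
    _ ≤ ∑' k, ∫⁻ z in E k, ENNReal.ofReal (g z) ∂μ := lintegral_iUnion_le _ _
    _ ≤ ∑' k, ENNReal.ofReal (4 * A * B * ρ * (1 / 2) ^ k) := ENNReal.tsum_le_tsum hE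
    _ = ENNReal.ofReal (8 * A * B * ρ) := by
        rw [← ENNReal.ofReal_tsum_of_nonneg (fun k => by positivity)
          (summable_geometric_two.mul_left _), tsum_mul_left, tsum_geometric_two]
        congr 1
        ring

theorem IsJordanCurve.exists_pos_forall_exists_le_dist {Γ : Set ℂ} (hJ : IsJordanCurve Γ) :
    ∃ D > 0, ∀ ζ : ℂ, ∃ w ∈ Γ, D ≤ dist w ζ := by
  obtain ⟨γ, -, hγ, rfl⟩ := hJ
  have h1 : (1:ℂ) ∈ sphere (0:ℂ) 1 := by simp
  have h2 : (-1:ℂ) ∈ sphere (0:ℂ) 1 := by simp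
  have hne : γ 1 ≠ γ (-1) := hγ.ne h1 h2 (by norm_num)
  refine ⟨dist (γ 1) (γ (-1)) / 2, half_pos (dist_pos.2 hne), fun ζ => ?_⟩
  by_contra! hcon
  linarith [hcon _ (mem_image_of_mem γ h1), hcon _ (mem_image_of_mem γ h2),
    dist_triangle_right (γ 1) (γ (-1)) ζ]

theorem rpow_le_of_le_mul_sq {x c s r : ℝ} (hx : 0 ≤ x) (hc : 0 ≤ c) (hr : 1 ≤ r) (hs₀ : 0 < s)
    (hs : s ≤ 2) (h : x ≤ c * s ^ 2) : x ^ r ≤ (4 * c) ^ r * s ^ 2 := by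
  calc x ^ r ≤ ((4 * c) * (s ^ 2 / 4)) ^ r := by
        refine Real.rpow_le_rpow hx ?_ (by linarith)
        linarith
    _ = (4 * c) ^ r * (s ^ 2 / 4) ^ r := Real.mul_rpow (by positivity) (by positivity)
    _ ≤ (4 * c) ^ r * (s ^ 2 / 4) ^ (1 : ℝ) := by
        gcongr ?_ * ?_
        exact Real.rpow_le_rpow_of_exponent_ge (by positivity) (by nlinarith) hr
    _ ≤ _ := by
        rw [Real.rpow_one]
        gcongr
        nlinarith

/-- Lemma 3.3 / (3.1v): for every `r ≥ 1` and bounds `c₃, c₄ > 0` there is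
`c₇ = c₇(Γ,r,c₃,c₄) > 0` such that for every `n`, every `ζ ∈ Γ` and every Borel `q : Γ → ℂ`
with `1/c₃ ≤ |q(z)| ≤ c₃` for `|ζ-z| ≤ ρ_{1/n}(z)` and
`|q(z)| ≤ c₄ (ρ_{1/n}(ζ)/|ζ-z|)²` for `|ζ-z| > ρ_{1/n}(z)`, one has
`ρ_{1/n}(ζ)/c₇ ≤ ∫_Γ |q(z)|^r |dz| ≤ c₇ ρ_{1/n}(ζ)`. -/
theorem kernel_lp_norm_bounds
    (Γ : Set ℂ) (Λ : ℝ) (hΓJ : IsJordanCurve Γ) (hΓq : IsQuasismooth Γ Λ)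
    (Φ : ℂ → ℂ) (hΦ : IsExtConformal (unboundedComponent Γ) Φ) :
    ∀ c₃ c₄ r : ℝ, 0 < c₃ → 0 < c₄ → 1 ≤ r → ∃ c₇ > (0:ℝ),
      ∀ (n : ℕ), 0 < n → ∀ ζ ∈ Γ, ∀ q : ℂ → ℂ, Measurable q →
      (∀ z ∈ Γ, dist ζ z ≤ rho (unboundedComponent Γ) Φ (1/(n:ℝ)) z →
        1/c₃ ≤ ‖q z‖ ∧ ‖q z‖ ≤ c₃) →
      (∀ z ∈ Γ, rho (unboundedComponent Γ) Φ (1/(n:ℝ)) z < dist ζ z →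
        ‖q z‖ ≤ c₄ * (rho (unboundedComponent Γ) Φ (1/(n:ℝ)) ζ / dist ζ z) ^ 2) →
      rho (unboundedComponent Γ) Φ (1/(n:ℝ)) ζ / c₇ ≤ (∫ z in Γ, ‖q z‖ ^ r ∂μH[1]) ∧
        (∫ z in Γ, ‖q z‖ ^ r ∂μH[1]) ≤ c₇ * rho (unboundedComponent Γ) Φ (1/(n:ℝ)) ζ := by
  intro c₃ c₄ r hc₃ hc₄ hr
  obtain ⟨γ, hγ⟩ := hΓJ.exists_param
  have hcpt := hγ.isCompact
  obtain ⟨C, hC, hcomp⟩ := hΦ.exists_rho_le_mul_rho hΓJ hΓq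
  obtain ⟨R₀, hR₀, hρR₀⟩ := hΦ.exists_rho_le hcpt
  obtain ⟨D, hD, hfar⟩ := hΓJ.exists_pos_forall_exists_le_dist
  have hΛ := hΓq.1
  set A := 2 * (Λ + 1)
  have hA : 0 ≤ A := by positivity
  set B := c₃ ^ r * (1 + C ^ 2) + 4 * (4 * c₄) ^ r
  have hB : 0 < B := by positivity
  set κ := min (1 / 2) (D / R₀)
  have hκ : 0 < κ := lt_min (by norm_num) (by positivity)
  have hm : 0 < (1 / c₃) ^ r * κ := by positivity
  refine ⟨8 * A * B + 1 / ((1 / c₃) ^ r * κ), by positivity, fun n hn ζ hζ q hqm hnear hdecay => ?_⟩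
  have hn' : (1:ℝ) ≤ n := by exact_mod_cast hn
  have hδ : 0 < 1 / (n:ℝ) := by positivity
  have hδ1 : 1 / (n:ℝ) ≤ 1 := by rw [div_le_one (by positivity)]; exact hn'
  have hρ := hΦ.rho_pos hcpt hδ hζ
  have hρle := hρR₀ _ hδ hδ1 ζ hζ
  have hlip : ∀ z, rho (unboundedComponent Γ) Φ (1 / (n:ℝ)) ζ ≤
      rho (unboundedComponent Γ) Φ (1 / (n:ℝ)) z + dist ζ z := fun z => infDist_le_infDist_add_dist
  have hcompn := fun z hz => hcomp _ hδ z hz ζ hζ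
  generalize rho (unboundedComponent Γ) Φ (1 / (n:ℝ)) = d at *
  have hbound : ∀ z ∈ Γ, ‖q z‖ ^ r ≤ B ∧ ‖q z‖ ^ r * dist z ζ ^ 2 ≤ B * d ζ ^ 2 := fun z hz => by
    have hp3 : 0 < c₃ ^ r := by positivity
    have hp4 : 0 < (4 * c₄) ^ r := by positivity
    have hC2 : 0 < C ^ 2 := by positivity
    rw [dist_comm z ζ]
    rcases le_or_gt (dist ζ z) (d z) with h | h
    · have h1 : ‖q z‖ ^ r ≤ c₃ ^ r := by
        have := (hnear z hz h).2
        gcongr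
      have h2 : dist ζ z ^ 2 ≤ (C * d ζ) ^ 2 := by
        have := h.trans (hcompn z hz h)
        gcongr
      refine ⟨by simp only [B]; nlinarith, ?_⟩
      calc _ ≤ c₃ ^ r * (C * d ζ) ^ 2 := by gcongr
        _ = c₃ ^ r * C ^ 2 * d ζ ^ 2 := by ring
        _ ≤ _ := by
          gcongr
          simp only [B]
          nlinarith
    · have hpos : 0 < dist ζ z := by
        refine lt_of_le_of_ne dist_nonneg fun h0 => ?_
        rw [dist_eq_zero.1 h0.symm] at h hρ
        rw [dist_self] at h
        exact h.not_gt hρ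
      have hs : d ζ / dist ζ z ≤ 2 := by
        rw [div_le_iff₀ hpos]
        linarith [hlip z]
      have h1 := rpow_le_of_le_mul_sq (norm_nonneg _) hc₄.le hr (by positivity) hs (hdecay z hz h)
      have h3 : (d ζ / dist ζ z) ^ 2 ≤ 4 := by
        have := pow_le_pow_left₀ (by positivity) hs 2
        linarith
      constructor
      · have := mul_le_mul_of_nonneg_left h3 hp4.le
        simp only [B]
        nlinarith
      · calc _ ≤ (4 * c₄) ^ r * (d ζ / dist ζ z) ^ 2 * dist ζ z ^ 2 := by gcongr
          _ = (4 * c₄) ^ r * d ζ ^ 2 := by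
            rw [div_pow, mul_assoc, div_mul_cancel₀ _ (by positivity)]
          _ ≤ _ := by
            gcongr
            simp only [B]
            nlinarith
  have hupper : ∫⁻ z in Γ, ENNReal.ofReal (‖q z‖ ^ r) ∂μH[1] ≤
      ENNReal.ofReal (8 * A * B * d ζ) := by
    refine setLIntegral_le_of_quadratic_decay hA (fun R hR => ?_) hρ hB.le
      (fun z hz => (hbound z hz).1) fun z hz => (hbound z hz).2
    refine (hΓq.hausdorffMeasure_inter_closedBall_le hΓJ hζ R).trans_eq ?_
    rw [← ENNReal.ofReal_ofNat 2, ← ENNReal.ofReal_mul zero_le_two, ← mul_assoc]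
  have hlower : ENNReal.ofReal ((1 / c₃) ^ r * κ * d ζ) ≤
      ∫⁻ z in Γ, ENNReal.ofReal (‖q z‖ ^ r) ∂μH[1] := by
    obtain ⟨w, hw, hDw⟩ := hfar ζ
    have hκ1 : κ * d ζ ≤ d ζ / 2 := by
      have := mul_le_mul_of_nonneg_right (min_le_left (1 / 2) (D / R₀)) hρ.le
      linarith
    have hκ2 : κ * d ζ ≤ dist w ζ := by
      refine le_trans ?_ hDw
      calc κ * d ζ ≤ D / R₀ * R₀ := by
            gcongr
            exact min_le_right _ _
        _ = D := div_mul_cancel₀ _ hR₀.ne'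
    calc _ = ENNReal.ofReal ((1 / c₃) ^ r) * ENNReal.ofReal (κ * d ζ) := by
          rw [mul_assoc, ENNReal.ofReal_mul (by positivity)]
      _ ≤ ENNReal.ofReal ((1 / c₃) ^ r) * μH[1] (Γ ∩ closedBall ζ (κ * d ζ)) := by
          gcongr
          exact hγ.isPreconnected.ofReal_le_hausdorffMeasure hζ hw hκ2
      _ = ∫⁻ z in Γ ∩ closedBall ζ (κ * d ζ), ENNReal.ofReal ((1 / c₃) ^ r) ∂μH[1] :=
          (setLIntegral_const _ _).symm
      _ ≤ ∫⁻ z in Γ ∩ closedBall ζ (κ * d ζ), ENNReal.ofReal (‖q z‖ ^ r) ∂μH[1] := by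
          refine setLIntegral_mono' (hcpt.isClosed.measurableSet.inter
            isClosed_closedBall.measurableSet) fun z hz => ?_
          have h1 : dist ζ z ≤ κ * d ζ := by rw [dist_comm]; exact hz.2
          have h2 := (hnear z hz.1 (by linarith [hlip z])).1
          gcongr
      _ ≤ _ := lintegral_mono_set inter_subset_left
  have heq : ∫ z in Γ, ‖q z‖ ^ r ∂μH[1] =
      (∫⁻ z in Γ, ENNReal.ofReal (‖q z‖ ^ r) ∂μH[1]).toReal :=
    integral_eq_lintegral_of_nonneg_ae (Eventually.of_forall fun z => by positivity)
      (hqm.norm.pow_const r).aestronglyMeasurable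
  rw [heq]
  constructor
  · refine le_trans ?_ ((ENNReal.ofReal_le_iff_le_toReal (ne_top_of_le_ne_top
      ENNReal.ofReal_ne_top hupper)).1 hlower)
    rw [div_le_iff₀ (by positivity)]
    have h1 : (1 / c₃) ^ r * κ * d ζ * (1 / ((1 / c₃) ^ r * κ)) = d ζ := by field_simp
    have h2 : 0 ≤ (1 / c₃) ^ r * κ * d ζ * (8 * A * B) := by positivity
    linarith
  · refine (ENNReal.toReal_le_of_le_ofReal (by positivity) hupper).trans ?_
    gcongr
    exact le_add_of_nonneg_right (by positivity)
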